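/- For every integer n with 3 ≤ n ≤ 8, there exists no tight Euclidean 6-design in ℝⁿ supported by two concentric spheres (with any positive weight function, constant or not). -/

import Mathlib

/-!
Let `(X, w)` be a tight Euclidean `6`-design on two spheres, with `N = C(n + 3, 3)` points.

Tightness with `dim Pol₃(S) = dim Pol₃(ℝⁿ)` excludes the radius `0` (`exists_norm_ne`), and the
design identity for the constant `1` shows that both surface measures can be normalized to invariant
probability measures (`sphAvg_one_eq`, `exists_isSphereProb`). The invariance determines all moments
that are needed (`IsSphereProb.moments`), and hence an explicit reproducing kernel `K(x, ·)` of degree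
three on the two spheres (`kernPoly`, `TwoShell.reproducing`): by the design identity,
`f x = ∑ y ∈ X, w y * K(x, y) * f y` for all cubic `f`. Cubics on the two spheres are therefore
determined by their values on `X`, and since `|X|` is the dimension every function on `X` is the
restriction of a cubic (`interpolates`). Inserting indicator functions gives `w x * K(x, x) = 1` and
`K(x, y) = 0` for distinct `x, y` in `X` (`TwoShell.kernel_values`).

The first relation shows that `w` is constant on each sphere. For `x` and `y` on different spheres,
the second one says that the cosine `c` of the angle between `x` and `y` satisfies
`c³ + u c² - 3 c / (n + 2) - u / n = 0` with a constant `u` (`TwoShell.exists_cubic`). Moreover, each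
shell is a spherical `4`-design (`TwoShell.cosMoments`), because the design identity can be applied to
polynomials with a factor `‖y‖² - ρ²` vanishing on the other sphere. So the cosines from a point of
one sphere to the points of the other have the first four moments of the uniform distribution. These
moments cannot come from two values only, so all three roots `c₁, c₂, c₃` of the cubic occur, with
multiplicities given by Lagrange interpolation.

Let `kᵢ ≥ 1` be the sum of the multiplicities of `cᵢ` seen from one point of each sphere, so that
`k₁ + k₂ + k₃ = N`. Eliminating the `cᵢ` and `u` leaves one polynomial equation in `n, k₁, k₂, k₃`
(`weights_equation`), and a finite search shows that for `3 ≤ n ≤ 8` it has no solution in positive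
integers with sum `N` (`no_weights`).
-/


open MeasureTheory Metric Finset
open scoped Classical RealInnerProductSpace

noncomputable section

/-- Euclidean `n`-space `ℝⁿ`. -/
abbrev Euc (n : ℕ) := EuclideanSpace ℝ (Fin n)

/-- Evaluation of a multivariate polynomial at a point of `ℝⁿ`. -/
def evalPt {n : ℕ} (x : Euc n) (p : MvPolynomial (Fin n) ℝ) : ℝ :=
  MvPolynomial.eval (fun i => x i) p

/-- The normalized average (with respect to the `O(n)`-invariant surface measure,
i.e. the `(n-1)`-dimensional Hausdorff measure) of `f` over the sphere of radius `r`
centered at the origin; for `r = 0` it is `f 0`. -/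
def sphAvg (n : ℕ) (r : ℝ) (f : Euc n → ℝ) : ℝ :=
  if r = 0 then f 0
  else ⨍ y in Metric.sphere (0 : Euc n) r, f y ∂(μH[(n : ℝ) - 1])

/-- `(X, w)` is a Euclidean `t`-design in `ℝⁿ`:
`∑ᵢ (w(Xᵢ)/|Sᵢ|) ∫_{Sᵢ} f dσᵢ = ∑_{x ∈ X} w(x) f(x)` for all polynomials `f` of
degree at most `t`, where the `Sᵢ` are the concentric spheres supporting `X`. -/
def IsEuclideanDesign (n t : ℕ) (X : Finset (Euc n)) (w : Euc n → ℝ) : Prop :=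
  ∀ p : MvPolynomial (Fin n) ℝ, p.totalDegree ≤ t →
    ∑ r ∈ X.image (fun x => ‖x‖),
        (∑ x ∈ X.filter (fun x => ‖x‖ = r), w x) * sphAvg n r (fun y => evalPt y p)
      = ∑ x ∈ X, w x * evalPt x p

/-- Restriction of polynomials to a subset `S ⊆ ℝⁿ`, as a linear map. -/
def polyRestrict (n : ℕ) (S : Set (Euc n)) :
    MvPolynomial (Fin n) ℝ →ₗ[ℝ] (S → ℝ) where
  toFun p := fun x => evalPt (x : Euc n) p
  map_add' p q := by funext x; simp [evalPt]
  map_smul' c p := by funext x; simp [evalPt, MvPolynomial.smul_eval]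

/-- `Pol_e(S)`: the space of restrictions to `S` of polynomials of total degree at most `e`. -/
def PolOn (n e : ℕ) (S : Set (Euc n)) : Submodule ℝ (S → ℝ) :=
  (MvPolynomial.restrictTotalDegree (Fin n) ℝ e).map (polyRestrict n S)

/-- `dim Pol_e(S)`. -/
def dimPolOn (n e : ℕ) (S : Set (Euc n)) : ℕ := Module.finrank ℝ (PolOn n e S)

/-- The union of the concentric spheres (centered at the origin) supporting `X`. -/
def suppSpheres (n : ℕ) (X : Finset (Euc n)) : Set (Euc n) :=
  ⋃ r ∈ X.image (fun x => ‖x‖), Metric.sphere (0 : Euc n) r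

/-- `(X, w)` is a tight Euclidean `2e`-design on `S` (the union of the concentric
spheres supporting `X`): it is a Euclidean `2e`-design with `|X| = dim Pol_e(S)`. -/
def IsTightOnS (n e : ℕ) (X : Finset (Euc n)) (w : Euc n → ℝ) : Prop :=
  IsEuclideanDesign n (2 * e) X w ∧ X.card = dimPolOn n e (suppSpheres n X)

/-- `(X, w)` is a tight Euclidean `2e`-design: tight on `S` and moreover
`dim Pol_e(S) = dim Pol_e(ℝⁿ) = C(n+e, e)`. -/
def IsTightDesign (n e : ℕ) (X : Finset (Euc n)) (w : Euc n → ℝ) : Prop :=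
  IsTightOnS n e X w ∧ dimPolOn n e (suppSpheres n X) = (n + e).choose e

/-! ### Invariant probability measures on spheres and their moments -/

/-- `ν` is a rotation-invariant probability measure carried by the sphere of radius `r`. -/
structure IsSphereProb (n : ℕ) (r : ℝ) (ν : Measure (Euc n)) : Prop where
  prob : IsProbabilityMeasure ν
  norm_ae : ∀ᵐ y ∂ν, ‖y‖ = r
  inv : ∀ g : Euc n ≃ₗᵢ[ℝ] Euc n, MeasurePreserving g ν ν

/-- On a sphere where the constant `1` has average `1`, the averaging functional is integration
against an invariant probability measure. The hypothesis replaces the computation of the Hausdorff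
measure of the sphere: it says exactly that this measure is neither zero nor infinite. -/
lemma exists_isSphereProb {n : ℕ} {r : ℝ} (hr : r ≠ 0) (h1 : sphAvg n r (fun _ => 1) = 1) :
    ∃ ν : Measure (Euc n), IsSphereProb n r ν ∧ ∀ f, sphAvg n r f = ∫ y, f y ∂ν := by
  set μ : Measure (Euc n) := (μH[(n : ℝ) - 1]).restrict (Metric.sphere (0 : Euc n) r) with hμ
  refine ⟨(μ Set.univ)⁻¹ • μ, ⟨⟨?_⟩, ?_, ?_⟩, ?_⟩
  · have h2 : ∫ _y : Euc n, (1 : ℝ) ∂((μ Set.univ)⁻¹ • μ) = 1 := by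
      rw [sphAvg, if_neg hr, average_eq'] at h1
      exact h1
    rw [integral_const, smul_eq_mul, mul_one, measureReal_def] at h2
    exact (ENNReal.toReal_eq_one_iff _).1 h2
  · apply Measure.ae_smul_measure
    have := ae_restrict_mem (μ := (μH[(n : ℝ) - 1] : Measure (Euc n)))
      (Metric.isClosed_sphere (x := (0 : Euc n)) (ε := r)).measurableSet
    filter_upwards [this] with y hy
    simpa using hy
  · intro g
    apply MeasurePreserving.smul_measure
    have h := (g.toIsometryEquiv.measurePreserving_hausdorffMeasure ((n : ℝ) - 1)).restrict_preimage
      (Metric.isClosed_sphere (x := (0 : Euc n)) (ε := r)).measurableSet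
    have h3 : (g.toIsometryEquiv ⁻¹' Metric.sphere (0 : Euc n) r) = Metric.sphere (0 : Euc n) r := by
      ext y; simp
    rw [h3] at h
    exact h
  · intro f
    simp [sphAvg, hr, average_eq', hμ]

namespace IsSphereProb

variable {n : ℕ} {r : ℝ} {ν : Measure (Euc n)}

lemma integrable (h : IsSphereProb n r ν) {f : Euc n → ℝ} (hf : Continuous f) :
    Integrable f ν := by
  have := h.prob
  obtain ⟨C, hC⟩ := (isCompact_sphere (0 : Euc n) r).exists_bound_of_continuousOn hf.continuousOn
  refine Integrable.of_bound hf.aestronglyMeasurable C ?_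
  filter_upwards [h.norm_ae] with y hy
  exact hC y (by simpa using hy)

lemma integral_congr_sphere (h : IsSphereProb n r ν) {f g : Euc n → ℝ}
    (hfg : ∀ y, ‖y‖ = r → f y = g y) : ∫ y, f y ∂ν = ∫ y, g y ∂ν := by
  apply integral_congr_ae
  filter_upwards [h.norm_ae] with y hy using hfg y hy

lemma integral_comp (h : IsSphereProb n r ν) (g : Euc n ≃ₗᵢ[ℝ] Euc n) (f : Euc n → ℝ) :
    ∫ y, f (g y) ∂ν = ∫ y, f y ∂ν :=
  (h.inv g).integral_comp g.toHomeomorph.measurableEmbedding f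

lemma integral_odd (h : IsSphereProb n r ν) {f : Euc n → ℝ} (hf : ∀ y, f (-y) = -f y) :
    ∫ y, f y ∂ν = 0 := by
  have := h.integral_comp (LinearIsometryEquiv.neg ℝ) f
  simp only [LinearIsometryEquiv.coe_neg, hf, integral_neg] at this
  linarith

lemma moment_eq_of_norm_eq (h : IsSphereProb n r ν) (k : ℕ) {z z' : Euc n} (hz : ‖z‖ = ‖z'‖) :
    ∫ y, inner ℝ z y ^ k ∂ν = ∫ y, inner ℝ z' y ^ k ∂ν := by
  rw [← h.integral_comp (Submodule.reflection (ℝ ∙ (z - z'))ᗮ)]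
  congr 1
  ext y
  congr 1
  rw [← LinearIsometryEquiv.inner_map_map (Submodule.reflection (ℝ ∙ (z - z'))ᗮ),
    Submodule.reflection_reflection, Submodule.reflection_sub hz]

/-- A zonal moment is the corresponding moment in a fixed direction, scaled by a power of the
norm. -/
lemma exists_moment (h : IsSphereProb n r ν) (hn : 0 < n) (m : ℕ) :
    ∃ D : ℝ, ∀ z : Euc n, ∫ y, inner ℝ z y ^ (2 * m) ∂ν = D * (inner ℝ z z) ^ m := by
  set e : Euc n := EuclideanSpace.single ⟨0, hn⟩ (1 : ℝ)
  refine ⟨∫ y, inner ℝ e y ^ (2 * m) ∂ν, fun z => ?_⟩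
  have he : ‖e‖ = 1 := by simp [e]
  rw [h.moment_eq_of_norm_eq (2 * m) (z' := ‖z‖ • e) (by rw [norm_smul, he]; simp)]
  simp only [inner_smul_left, mul_pow, integral_const_mul, real_inner_self_eq_norm_sq]
  simp only [conj_trivial]
  ring

/-- Polarization: a mixed moment is a linear combination of the moments in the directions
`p + t q` for a few numbers `t`. -/
lemma polarize_two (h : IsSphereProb n r ν) {D : ℝ}
    (hD : ∀ z : Euc n, ∫ y, inner ℝ z y ^ 2 ∂ν = D * inner ℝ z z) (p q : Euc n) :
    ∫ y, inner ℝ p y * inner ℝ q y ∂ν = D * inner ℝ p q := by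
  have e : ∀ y : Euc n, inner ℝ p y * inner ℝ q y =
      (1 / 4) * inner ℝ (p + q) y ^ 2 - (1 / 4) * inner ℝ (p - q) y ^ 2 := by
    intro y; simp only [inner_add_left, inner_sub_left]; ring
  simp only [e]
  rw [integral_sub (h.integrable (by fun_prop)) (h.integrable (by fun_prop))]
  simp only [integral_const_mul, hD]
  simp only [inner_add_left, inner_add_right, inner_sub_left,
    inner_sub_right, real_inner_comm p q]
  ring

lemma polarize_four (h : IsSphereProb n r ν) {D : ℝ}
    (hD : ∀ z : Euc n, ∫ y, inner ℝ z y ^ 4 ∂ν = D * inner ℝ z z ^ 2) (p q : Euc n) :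
    ∫ y, inner ℝ p y ^ 2 * inner ℝ q y ^ 2 ∂ν
      = D / 3 * (inner ℝ p p * inner ℝ q q + 2 * inner ℝ p q ^ 2) ∧
    ∫ y, inner ℝ p y ^ 3 * inner ℝ q y ∂ν = D * (inner ℝ p p * inner ℝ p q) := by
  constructor
  · have e : ∀ y : Euc n, inner ℝ p y ^ 2 * inner ℝ q y ^ 2 =
        (1 / 12) * inner ℝ (p + q) y ^ 4 + (1 / 12) * inner ℝ (p - q) y ^ 4
        + (-1 / 6) * inner ℝ p y ^ 4 + (-1 / 6) * inner ℝ q y ^ 4 := by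
      intro y; simp only [inner_add_left, inner_sub_left]; ring
    simp only [e]
    rw [integral_add (h.integrable (by fun_prop)) (h.integrable (by fun_prop)),
      integral_add (h.integrable (by fun_prop)) (h.integrable (by fun_prop)),
      integral_add (h.integrable (by fun_prop)) (h.integrable (by fun_prop))]
    simp only [integral_const_mul, hD]
    simp only [inner_add_left, inner_add_right, inner_sub_left,
      inner_sub_right, real_inner_comm p q]
    ring
  · have e : ∀ y : Euc n, inner ℝ p y ^ 3 * inner ℝ q y =
        (-1 / 48) * inner ℝ (p + (2 : ℝ) • q) y ^ 4 + (1 / 48) * inner ℝ (p - (2 : ℝ) • q) y ^ 4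
        + (1 / 6) * inner ℝ (p + q) y ^ 4 + (-1 / 6) * inner ℝ (p - q) y ^ 4 := by
      intro y; simp only [inner_add_left, inner_sub_left, inner_smul_left, conj_trivial]; ring
    simp only [e]
    rw [integral_add (h.integrable (by fun_prop)) (h.integrable (by fun_prop)),
      integral_add (h.integrable (by fun_prop)) (h.integrable (by fun_prop)),
      integral_add (h.integrable (by fun_prop)) (h.integrable (by fun_prop))]
    simp only [integral_const_mul, hD]
    simp only [inner_add_left, inner_add_right, inner_sub_left,
      inner_sub_right, inner_smul_left, inner_smul_right, conj_trivial, real_inner_comm p q]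
    ring

lemma polarize_six (h : IsSphereProb n r ν) {D : ℝ}
    (hD : ∀ z : Euc n, ∫ y, inner ℝ z y ^ 6 ∂ν = D * inner ℝ z z ^ 3) (p q : Euc n) :
    ∫ y, inner ℝ p y ^ 4 * inner ℝ q y ^ 2 ∂ν
      = D / 5 * (inner ℝ p p ^ 2 * inner ℝ q q + 4 * inner ℝ p p * inner ℝ p q ^ 2) ∧
    ∫ y, inner ℝ p y ^ 3 * inner ℝ q y ^ 3 ∂ν
      = D / 5 * (3 * inner ℝ p p * inner ℝ p q * inner ℝ q q + 2 * inner ℝ p q ^ 3) := by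
  constructor
  · have e : ∀ y : Euc n, inner ℝ p y ^ 4 * inner ℝ q y ^ 2 =
        (16 / 360) * inner ℝ (p + q) y ^ 6 + (16 / 360) * inner ℝ (p - q) y ^ 6
        + (-1 / 360) * inner ℝ (p + (2 : ℝ) • q) y ^ 6
        + (-1 / 360) * inner ℝ (p - (2 : ℝ) • q) y ^ 6
        + (-30 / 360) * inner ℝ p y ^ 6 + (96 / 360) * inner ℝ q y ^ 6 := by
      intro y; simp only [inner_add_left, inner_sub_left, inner_smul_left, conj_trivial]; ring
    simp only [e]
    rw [integral_add (h.integrable (by fun_prop)) (h.integrable (by fun_prop)),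
      integral_add (h.integrable (by fun_prop)) (h.integrable (by fun_prop)),
      integral_add (h.integrable (by fun_prop)) (h.integrable (by fun_prop)),
      integral_add (h.integrable (by fun_prop)) (h.integrable (by fun_prop)),
      integral_add (h.integrable (by fun_prop)) (h.integrable (by fun_prop))]
    simp only [integral_const_mul, hD]
    simp only [inner_add_left, inner_add_right, inner_sub_left,
      inner_sub_right, inner_smul_left, inner_smul_right, conj_trivial, real_inner_comm p q]
    ring
  · have e : ∀ y : Euc n, inner ℝ p y ^ 3 * inner ℝ q y ^ 3 =
        (-13 / 960) * inner ℝ (p + q) y ^ 6 + (13 / 960) * inner ℝ (p - q) y ^ 6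
        + (8 / 960) * inner ℝ (p + (2 : ℝ) • q) y ^ 6 + (-8 / 960) * inner ℝ (p - (2 : ℝ) • q) y ^ 6
        + (-1 / 960) * inner ℝ (p + (3 : ℝ) • q) y ^ 6 + (1 / 960) * inner ℝ (p - (3 : ℝ) • q) y ^ 6 := by
      intro y; simp only [inner_add_left, inner_sub_left, inner_smul_left, conj_trivial]; ring
    simp only [e]
    rw [integral_add (h.integrable (by fun_prop)) (h.integrable (by fun_prop)),
      integral_add (h.integrable (by fun_prop)) (h.integrable (by fun_prop)),
      integral_add (h.integrable (by fun_prop)) (h.integrable (by fun_prop)),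
      integral_add (h.integrable (by fun_prop)) (h.integrable (by fun_prop)),
      integral_add (h.integrable (by fun_prop)) (h.integrable (by fun_prop))]
    simp only [integral_const_mul, hD]
    simp only [inner_add_left, inner_add_right, inner_sub_left,
      inner_sub_right, inner_smul_left, inner_smul_right, conj_trivial, real_inner_comm p q]
    ring

lemma norm_sq_mul_moment (h : IsSphereProb n r ν) (k : ℕ) (z : Euc n) :
    r ^ 2 * ∫ y, inner ℝ z y ^ k ∂ν
      = ∑ i, ∫ y, inner ℝ z y ^ k * inner ℝ (EuclideanSpace.single i (1 : ℝ)) y ^ 2 ∂ν := by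
  rw [← integral_const_mul, ← integral_finsetSum _ (fun i _ => h.integrable (by fun_prop))]
  apply h.integral_congr_sphere
  intro y hy
  rw [← Finset.mul_sum, ← hy, EuclideanSpace.norm_sq_eq, mul_comm]
  simp [EuclideanSpace.inner_single_left]

/-- The moments of order two, four and six, found by contracting `‖y‖ ^ 2 = ∑ yᵢ ^ 2`. -/
lemma moments (h : IsSphereProb n r ν) (hn : 0 < n) (z : Euc n) :
    ∫ y, inner ℝ z y ^ 2 ∂ν = r ^ 2 / n * inner ℝ z z ∧
    ∫ y, inner ℝ z y ^ 4 ∂ν = 3 * r ^ 4 / (n * (n + 2)) * inner ℝ z z ^ 2 ∧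
    ∫ y, inner ℝ z y ^ 6 ∂ν = 15 * r ^ 6 / (n * (n + 2) * (n + 4)) * inner ℝ z z ^ 3 := by
  have := h.prob
  have hn' : (0 : ℝ) < n := by exact_mod_cast hn
  obtain ⟨D2, h2⟩ := h.exists_moment hn 1
  obtain ⟨D4, h4⟩ := h.exists_moment hn 2
  obtain ⟨D6, h6⟩ := h.exists_moment hn 3
  simp only [mul_one, pow_one, Nat.reduceMul] at h2 h4 h6
  set e : Euc n := EuclideanSpace.single ⟨0, hn⟩ (1 : ℝ)
  have he : inner ℝ e e = (1 : ℝ) := by simp [e]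
  have hse : ∑ i, inner ℝ e (EuclideanSpace.single i (1 : ℝ)) ^ 2 = (1 : ℝ) := by
    simp [e, EuclideanSpace.inner_single_left]
  have hs1 : ∀ i, inner ℝ (EuclideanSpace.single i (1 : ℝ) : Euc n)
    (EuclideanSpace.single i (1 : ℝ)) = (1 : ℝ) := by intro i; simp
  have k0 := h.norm_sq_mul_moment 0 e
  have k2 := h.norm_sq_mul_moment 2 e
  have k4 := h.norm_sq_mul_moment 4 e
  simp only [pow_zero, one_mul, h2, hs1, integral_const, probReal_univ, smul_eq_mul, mul_one,
    Finset.sum_const, Finset.card_univ, Fintype.card_fin, nsmul_eq_mul] at k0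
  simp only [h2, (h.polarize_four h4 _ _).1, hs1, he, ← Finset.mul_sum, Finset.sum_add_distrib,
    hse, mul_one, Finset.sum_const, Finset.card_univ, Fintype.card_fin, nsmul_eq_mul] at k2
  simp only [h4, (h.polarize_six h6 _ _).1, hs1, he, ← Finset.mul_sum, Finset.sum_add_distrib,
    hse, mul_one, Finset.sum_const, Finset.card_univ, Fintype.card_fin, nsmul_eq_mul,
    one_pow] at k4
  have e2 : D2 = r ^ 2 / n := by field_simp; linarith
  have e4 : D4 = 3 * r ^ 4 / (n * (n + 2)) := by
    rw [e2] at k2; field_simp at k2 ⊢; linarith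
  have e6 : D6 = 15 * r ^ 6 / (n * (n + 2) * (n + 4)) := by
    rw [e4] at k4; field_simp at k4 ⊢; linarith
  exact ⟨by rw [h2, e2], by rw [h4, e4], by rw [h6, e6]⟩

end IsSphereProb

namespace IsSphereProb

variable {n : ℕ} {r : ℝ} {ν : Measure (Euc n)}

/-- Integrals of `⟪x, y⟫ ^ a * (t + ⟪z, y⟫) ^ 3` for `a ≤ 3`. -/
lemma integral_mul_cube (h : IsSphereProb n r ν) (hn : 0 < n) (x z : Euc n) (t : ℝ) :
    ∫ y, (t + inner ℝ z y) ^ 3 ∂ν = t ^ 3 + 3 * t * (r ^ 2 / n * inner ℝ z z) ∧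
    ∫ y, inner ℝ x y * (t + inner ℝ z y) ^ 3 ∂ν = 3 * t ^ 2 * (r ^ 2 / n * inner ℝ x z)
      + 3 * r ^ 4 / (n * (n + 2)) * (inner ℝ z z * inner ℝ x z) ∧
    ∫ y, inner ℝ x y ^ 2 * (t + inner ℝ z y) ^ 3 ∂ν = t ^ 3 * (r ^ 2 / n * inner ℝ x x)
      + 3 * t * (r ^ 4 / (n * (n + 2)) * (inner ℝ x x * inner ℝ z z + 2 * inner ℝ x z ^ 2)) ∧
    ∫ y, inner ℝ x y ^ 3 * (t + inner ℝ z y) ^ 3 ∂ν =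
      3 * t ^ 2 * (3 * r ^ 4 / (n * (n + 2)) * (inner ℝ x x * inner ℝ x z))
      + r ^ 6 / (n * (n + 2) * (n + 4)) *
        (9 * inner ℝ x x * inner ℝ x z * inner ℝ z z + 6 * inner ℝ x z ^ 3) := by
  have := h.prob
  have h2 := fun z => (h.moments hn z).1
  have h4 := fun z => (h.moments hn z).2.1
  have h6 := fun z => (h.moments hn z).2.2
  have key : ∀ a : ℕ, ∫ y, inner ℝ x y ^ a * (t + inner ℝ z y) ^ 3 ∂ν =
      t ^ 3 * ∫ y, inner ℝ x y ^ a ∂ν + 3 * t ^ 2 * ∫ y, inner ℝ x y ^ a * inner ℝ z y ∂ν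
      + 3 * t * ∫ y, inner ℝ x y ^ a * inner ℝ z y ^ 2 ∂ν
      + ∫ y, inner ℝ x y ^ a * inner ℝ z y ^ 3 ∂ν := by
    intro a
    simp only [← integral_const_mul]
    rw [← integral_add (h.integrable (by fun_prop)) (h.integrable (by fun_prop)),
      ← integral_add (h.integrable (by fun_prop)) (h.integrable (by fun_prop)),
      ← integral_add (h.integrable (by fun_prop)) (h.integrable (by fun_prop))]
    congr 1; ext y; ring
  have odd : ∀ a b : ℕ, Odd (a + b) → ∫ y, inner ℝ x y ^ a * inner ℝ z y ^ b ∂ν = 0 := by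
    intro a b hab
    apply h.integral_odd
    intro y
    rw [inner_neg_right, inner_neg_right, neg_pow, neg_pow (inner ℝ z y)]
    have := hab.neg_one_pow (α := ℝ)
    rw [pow_add] at this
    linear_combination (inner ℝ x y ^ a * inner ℝ z y ^ b) * this
  have o10 := odd 1 0 (by decide)
  have o30 := odd 3 0 (by decide)
  have o01 := odd 0 1 (by decide)
  have o03 := odd 0 3 (by decide)
  have o12 := odd 1 2 (by decide)
  have o21 := odd 2 1 (by decide)
  have o23 := odd 2 3 (by decide)
  have o32 := odd 3 2 (by decide)
  have p13 : ∫ y, inner ℝ x y * inner ℝ z y ^ 3 ∂ν =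
      3 * r ^ 4 / (n * (n + 2)) * (inner ℝ z z * inner ℝ x z) := by
    rw [real_inner_comm z x, ← (h.polarize_four h4 z x).2]
    congr 1; ext y; ring
  simp only [pow_zero, pow_one, one_mul, mul_one] at o10 o30 o01 o03 o12 o21 o23 o32
  refine ⟨?_, ?_, ?_, ?_⟩
  · have := key 0
    simp only [pow_zero, one_mul, integral_const, probReal_univ, smul_eq_mul, o01, o03, h2] at this
    rw [this]; ring
  · have := key 1
    simp only [pow_one, o10, o12, h.polarize_two h2, p13] at this
    rw [this]; ring
  · have := key 2
    simp only [h2, o21, o23, (h.polarize_four h4 x z).1] at this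
    rw [this]; ring
  · have := key 3
    simp only [o30, o32, (h.polarize_four h4 x z).2, (h.polarize_six h6 x z).2] at this
    rw [this]; ring

/-- The kernel `kernPoly` integrated against a cube of an affine form. -/
lemma integral_kern (h : IsSphereProb n r ν) (hn : 0 < n) (x z : Euc n) (t a b c d : ℝ) :
    ∫ y, (a * (inner ℝ x y ^ 3 - 3 / (n + 2) * inner ℝ x x * inner ℝ y y * inner ℝ x y)
        + b * (inner ℝ x y ^ 2 - inner ℝ x x * inner ℝ y y / n)
        + (inner ℝ y y - d) * c * (n / inner ℝ x x * inner ℝ x y + 1))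
      * (t + inner ℝ z y) ^ 3 ∂ν
    = a * (6 * r ^ 6 / (n * (n + 2) * (n + 4)) *
          (inner ℝ x z ^ 3 - 3 / (n + 2) * inner ℝ x x * inner ℝ z z * inner ℝ x z))
      + b * (3 * t * (2 * r ^ 4 / (n * (n + 2)) *
          (inner ℝ x z ^ 2 - inner ℝ x x * inner ℝ z z / n)))
      + (r ^ 2 - d) * c * (n / inner ℝ x x * (3 * t ^ 2 * (r ^ 2 / n * inner ℝ x z)
        + 3 * r ^ 4 / (n * (n + 2)) * (inner ℝ z z * inner ℝ x z))
        + (t ^ 3 + 3 * t * (r ^ 2 / n * inner ℝ z z))) := by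
  obtain ⟨i0, i1, i2, i3⟩ := h.integral_mul_cube hn x z t
  have hn' : (0 : ℝ) < n := by exact_mod_cast hn
  have e : ∀ y : Euc n, ‖y‖ = r →
      (a * (inner ℝ x y ^ 3 - 3 / (n + 2) * inner ℝ x x * inner ℝ y y * inner ℝ x y)
        + b * (inner ℝ x y ^ 2 - inner ℝ x x * inner ℝ y y / n)
        + (inner ℝ y y - d) * c * (n / inner ℝ x x * inner ℝ x y + 1))
      * (t + inner ℝ z y) ^ 3 =
      a * (inner ℝ x y ^ 3 * (t + inner ℝ z y) ^ 3)
      + (- a * (3 / (n + 2) * inner ℝ x x * r ^ 2) + (r ^ 2 - d) * c * (n / inner ℝ x x)) *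
        (inner ℝ x y * (t + inner ℝ z y) ^ 3)
      + b * (inner ℝ x y ^ 2 * (t + inner ℝ z y) ^ 3)
      + (- b * (inner ℝ x x * r ^ 2 / n) + (r ^ 2 - d) * c) * (t + inner ℝ z y) ^ 3 := by
    intro y hy
    rw [real_inner_self_eq_norm_sq y, hy]
    ring
  rw [h.integral_congr_sphere e, integral_add (h.integrable (by fun_prop))
      (h.integrable (by fun_prop)), integral_add (h.integrable (by fun_prop))
      (h.integrable (by fun_prop)), integral_add (h.integrable (by fun_prop))
      (h.integrable (by fun_prop))]
  simp only [integral_const_mul, i0, i1, i2, i3]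
  generalize inner ℝ x x = X
  generalize inner ℝ x z = B
  generalize inner ℝ z z = Z
  have key1 : ((3 : ℝ) * t ^ 2 * (3 * r ^ 4 / (n * (n + 2)) * (X * B))
      + r ^ 6 / (n * (n + 2) * (n + 4)) * (9 * X * B * Z + 6 * B ^ 3))
      - (3 / (n + 2) * X * r ^ 2) * (3 * t ^ 2 * (r ^ 2 / n * B)
      + 3 * r ^ 4 / (n * (n + 2)) * (Z * B)) = 6 * r ^ 6 / (n * (n + 2) * (n + 4)) *
          (B ^ 3 - 3 / (n + 2) * X * Z * B) := by
    field_simp; ring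
  have key2 : (t ^ 3 * (r ^ 2 / n * X) + 3 * t * (r ^ 4 / (n * (n + 2)) * (X * Z + 2 * B ^ 2)))
      - (X * r ^ 2 / n) * (t ^ 3 + 3 * t * (r ^ 2 / n * Z)) =
      3 * t * (2 * r ^ 4 / (n * (n + 2)) * (B ^ 2 - X * Z / n)) := by
    field_simp; ring
  linear_combination a * key1 + b * key2

end IsSphereProb

/-! ### Polynomials of degree at most three -/

section Polynomials

open MvPolynomial

variable {n : ℕ}

/-- The linear form `⟪z, ·⟫` as a polynomial. -/
def linPoly (z : Euc n) : MvPolynomial (Fin n) ℝ := ∑ i, C (z i) * X i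

/-- The squared norm as a polynomial. -/
def nsqPoly (n : ℕ) : MvPolynomial (Fin n) ℝ := ∑ i, X i ^ 2

/-- The affine form `t + ⟪z, ·⟫` as a polynomial. -/
def affPoly (t : ℝ) (z : Euc n) : MvPolynomial (Fin n) ℝ := C t + linPoly z

@[simp] lemma evalPt_add (y : Euc n) (p q : MvPolynomial (Fin n) ℝ) :
    evalPt y (p + q) = evalPt y p + evalPt y q := by simp [evalPt]
@[simp] lemma evalPt_sub (y : Euc n) (p q : MvPolynomial (Fin n) ℝ) :
    evalPt y (p - q) = evalPt y p - evalPt y q := by simp [evalPt]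
@[simp] lemma evalPt_mul (y : Euc n) (p q : MvPolynomial (Fin n) ℝ) :
    evalPt y (p * q) = evalPt y p * evalPt y q := by simp [evalPt]
@[simp] lemma evalPt_pow (y : Euc n) (p : MvPolynomial (Fin n) ℝ) (k : ℕ) :
    evalPt y (p ^ k) = evalPt y p ^ k := by simp [evalPt]
@[simp] lemma evalPt_smul (y : Euc n) (c : ℝ) (p : MvPolynomial (Fin n) ℝ) :
    evalPt y (c • p) = c * evalPt y p := by simp [evalPt, smul_eval]
@[simp] lemma evalPt_C (y : Euc n) (c : ℝ) : evalPt y (C c) = c := by simp [evalPt]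
@[simp] lemma evalPt_one (y : Euc n) : evalPt y (1 : MvPolynomial (Fin n) ℝ) = 1 := by
  simp [evalPt]
@[simp] lemma evalPt_lin (y z : Euc n) : evalPt y (linPoly z) = inner ℝ z y := by
  simp [evalPt, linPoly, PiLp.inner_apply, mul_comm]
@[simp] lemma evalPt_nsq (y : Euc n) : evalPt y (nsqPoly n) = inner ℝ y y := by
  rw [real_inner_self_eq_norm_sq, EuclideanSpace.norm_sq_eq]
  simp [evalPt, nsqPoly]
@[simp] lemma evalPt_aff (y z : Euc n) (t : ℝ) : evalPt y (affPoly t z) = t + inner ℝ z y := by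
  simp [affPoly]

lemma continuous_evalPt (p : MvPolynomial (Fin n) ℝ) : Continuous fun y : Euc n => evalPt y p :=
  (MvPolynomial.continuous_eval p).comp (by fun_prop)

lemma degree_mul_le {p q : MvPolynomial (Fin n) ℝ} {a b c : ℕ} (hp : p.totalDegree ≤ a)
    (hq : q.totalDegree ≤ b) (h : a + b ≤ c) : (p * q).totalDegree ≤ c :=
  (totalDegree_mul p q).trans (by omega)

lemma degree_add_le {p q : MvPolynomial (Fin n) ℝ} {c : ℕ} (hp : p.totalDegree ≤ c)
    (hq : q.totalDegree ≤ c) : (p + q).totalDegree ≤ c :=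
  (totalDegree_add p q).trans (max_le hp hq)

lemma degree_sub_le {p q : MvPolynomial (Fin n) ℝ} {c : ℕ} (hp : p.totalDegree ≤ c)
    (hq : q.totalDegree ≤ c) : (p - q).totalDegree ≤ c :=
  (totalDegree_sub p q).trans (max_le hp hq)

lemma degree_C_le (a : ℝ) (c : ℕ) : (C a : MvPolynomial (Fin n) ℝ).totalDegree ≤ c := by simp

lemma degree_pow_le {p : MvPolynomial (Fin n) ℝ} {a k c : ℕ} (hp : p.totalDegree ≤ a)
    (h : k * a ≤ c) : (p ^ k).totalDegree ≤ c :=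
  (totalDegree_pow p k).trans ((Nat.mul_le_mul_left k hp).trans h)

lemma degree_lin (z : Euc n) : (linPoly z).totalDegree ≤ 1 :=
  totalDegree_finsetSum_le fun i _ =>
    degree_mul_le (degree_C_le _ 0) (totalDegree_X i).le (by omega)

lemma degree_nsq : (nsqPoly n).totalDegree ≤ 2 :=
  totalDegree_finsetSum_le fun i _ => degree_pow_le (totalDegree_X i).le (by omega)

lemma degree_aff (t : ℝ) (z : Euc n) : (affPoly t z).totalDegree ≤ 1 :=
  degree_add_le (degree_C_le _ _) (degree_lin z)

/-- Polynomial of degree three in `y` whose restriction to the two spheres is, for suitable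
constants `a`, `b`, `c`, `d`, the reproducing kernel at `x`: the first two terms are the zonal
harmonics of degree three and two, the last one is supported on the sphere of `x` and reproduces
the harmonics of degree at most one there. -/
def kernPoly (x : Euc n) (a b c d : ℝ) : MvPolynomial (Fin n) ℝ :=
  C a * (linPoly x ^ 3 - C (3 / (n + 2) * inner ℝ x x) * (nsqPoly n * linPoly x))
    + C b * (linPoly x ^ 2 - C (inner ℝ x x / n) * nsqPoly n)
    + C c * ((nsqPoly n - C d) * (C (n / inner ℝ x x) * linPoly x + 1))

lemma evalPt_kernPoly (x y : Euc n) (a b c d : ℝ) : evalPt y (kernPoly x a b c d) =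
    a * (inner ℝ x y ^ 3 - 3 / (n + 2) * inner ℝ x x * inner ℝ y y * inner ℝ x y)
        + b * (inner ℝ x y ^ 2 - inner ℝ x x * inner ℝ y y / n)
        + (inner ℝ y y - d) * c * (n / inner ℝ x x * inner ℝ x y + 1) := by
  simp only [kernPoly, evalPt_add, evalPt_sub, evalPt_mul, evalPt_pow, evalPt_C, evalPt_lin,
    evalPt_nsq, evalPt_one]
  ring

lemma degree_kernPoly (x : Euc n) (a b c d : ℝ) : (kernPoly x a b c d).totalDegree ≤ 3 := by
  refine degree_add_le (degree_add_le ?_ ?_) ?_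
  · refine degree_mul_le (degree_C_le _ 0) (degree_sub_le (degree_pow_le (degree_lin x) le_rfl)
      (degree_mul_le (degree_C_le _ 0) (degree_mul_le degree_nsq (degree_lin x) le_rfl) ?_)) ?_ <;>
      omega
  · refine degree_mul_le (b := 3) (degree_C_le _ 0) (degree_sub_le
      (degree_pow_le (degree_lin x) ?_) (degree_mul_le (degree_C_le _ 0) degree_nsq ?_)) ?_ <;>
      omega
  · refine degree_mul_le (b := 3) (degree_C_le _ 0) (degree_mul_le
      (degree_sub_le degree_nsq (degree_C_le _ _)) (degree_add_le (c := 1) (degree_mul_le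
      (degree_C_le _ 0) (degree_lin x) ?_) ?_) ?_) ?_
    · omega
    · simp
    · omega
    · omega

/-- The generators `1, X₁, …, Xₙ` of the polynomials of degree at most one. -/
def genPoly (o : Option (Fin n)) : MvPolynomial (Fin n) ℝ := o.elim 1 X

/-- The product of three generators. -/
def cubicPoly (s : Sym (Option (Fin n)) 3) : MvPolynomial (Fin n) ℝ :=
  ((s : Multiset (Option (Fin n))).map genPoly).prod

lemma mem_span_cubicPoly {p : MvPolynomial (Fin n) ℝ} (hp : p.totalDegree ≤ 3) :
    p ∈ Submodule.span ℝ (Set.range (cubicPoly (n := n))) := by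
  rw [p.as_sum]
  refine Submodule.sum_mem _ fun d hd => ?_
  have hd3 : Multiset.card (Finsupp.toMultiset d) ≤ 3 := by
    rw [Finsupp.card_toMultiset]
    exact (le_totalDegree hd).trans hp
  have hmon : monomial d (coeff d p) = (coeff d p) •
      ((Finsupp.toMultiset d).map (X : Fin n → MvPolynomial (Fin n) ℝ)).prod := by
    rw [Finsupp.toMultiset_map, Finsupp.prod_toMultiset, Finsupp.prod_mapDomain_index (by simp)
      (by intros; rw [pow_add]), monomial_eq, smul_eq_C_mul]
  rw [hmon]
  refine Submodule.smul_mem _ _ (Submodule.subset_span ?_)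
  refine ⟨⟨(Finsupp.toMultiset d).map some + Multiset.replicate (3 -
    Multiset.card (Finsupp.toMultiset d)) none, by
      rw [Multiset.card_add, Multiset.card_map, Multiset.card_replicate]; omega⟩, ?_⟩
  simp [cubicPoly, genPoly, Function.comp_def]

lemma finrank_restrictTotalDegree_le :
    Module.Finite ℝ (restrictTotalDegree (Fin n) ℝ 3) ∧
    Module.finrank ℝ (restrictTotalDegree (Fin n) ℝ 3) ≤ (n + 3).choose 3 := by
  have hle : restrictTotalDegree (Fin n) ℝ 3 ≤ Submodule.span ℝ (Set.range (cubicPoly (n := n))) :=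
    fun p hp => mem_span_cubicPoly ((mem_restrictTotalDegree _ _ _).1 hp)
  have hfin : Module.Finite ℝ (Submodule.span ℝ (Set.range (cubicPoly (n := n)))) :=
    Module.Finite.span_of_finite ℝ (Set.finite_range _)
  refine ⟨Submodule.finiteDimensional_of_le hle, (Submodule.finrank_mono hle).trans ?_⟩
  refine (finrank_range_le_card (R := ℝ) (cubicPoly (n := n))).trans ?_
  rw [Sym.card_sym_eq_choose]
  simp

lemma affPoly_add (t t' : ℝ) (z z' : Euc n) :
    affPoly t z + affPoly t' z' = affPoly (t + t') (z + z') := by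
  simp only [affPoly, linPoly, PiLp.add_apply, map_add, add_mul, Finset.sum_add_distrib]
  ring

lemma affPoly_neg (t : ℝ) (z : Euc n) : -affPoly t z = affPoly (-t) (-z) := by
  simp [affPoly, linPoly, add_comm]

lemma exists_affPoly (o : Option (Fin n)) : ∃ t z, genPoly o = affPoly t z := by
  cases o with
  | none => exact ⟨1, 0, by simp [genPoly, affPoly, linPoly]⟩
  | some i =>
    refine ⟨0, EuclideanSpace.single i 1, ?_⟩
    simp [genPoly, affPoly, linPoly, apply_ite C, ite_mul]

/-- Cubes of affine forms span the polynomials of degree at most three, because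
`24 a b c` is a signed sum of cubes of `±a ± b ± c`. -/
lemma eq_zero_of_cubes (φ : MvPolynomial (Fin n) ℝ →ₗ[ℝ] ℝ)
    (h : ∀ t z, φ (affPoly t z ^ 3) = 0) {p : MvPolynomial (Fin n) ℝ} (hp : p.totalDegree ≤ 3) :
    φ p = 0 := by
  have hspan : Submodule.span ℝ (Set.range (cubicPoly (n := n))) ≤ LinearMap.ker φ := by
    rw [Submodule.span_le]
    rintro _ ⟨⟨s, hs⟩, rfl⟩
    obtain ⟨a, b, c, rfl⟩ := Multiset.card_eq_three.1 hs
    have e : cubicPoly ⟨{a, b, c}, hs⟩ = genPoly a * genPoly b * genPoly c := by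
      simp [cubicPoly, mul_assoc]
    rw [SetLike.mem_coe, LinearMap.mem_ker, e]
    obtain ⟨t1, z1, e1⟩ := exists_affPoly a
    obtain ⟨t2, z2, e2⟩ := exists_affPoly b
    obtain ⟨t3, z3, e3⟩ := exists_affPoly c
    rw [e1, e2, e3]
    have e24 : (24 : ℕ) • (affPoly t1 z1 * affPoly t2 z2 * affPoly t3 z3) =
        (affPoly t1 z1 + affPoly t2 z2 + affPoly t3 z3) ^ 3
        - (affPoly t1 z1 + affPoly t2 z2 + -affPoly t3 z3) ^ 3
        - (affPoly t1 z1 + -affPoly t2 z2 + affPoly t3 z3) ^ 3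
        - (-affPoly t1 z1 + affPoly t2 z2 + affPoly t3 z3) ^ 3 := by
      rw [nsmul_eq_mul]; push_cast; ring
    have := congrArg φ e24
    simp only [affPoly_neg, affPoly_add, map_sub, h, map_nsmul, sub_zero] at this
    simpa using this
  exact LinearMap.mem_ker.1 (hspan (mem_span_cubicPoly hp))

end Polynomials

/-! ### Elimination of the cosines and the finite search -/

/-- Elimination of the nodes. Three nodes `cᵢ` with the elementary symmetric functions of the roots
of `c ^ 3 + u c ^ 2 - 3 c / (n + 2) - u / n`, together with their interpolation weights `kᵢ / N`,
leave a single homogeneous equation of degree six for the weights. -/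
lemma weights_equation {n N u c₁ c₂ c₃ k₁ k₂ k₃ : ℝ} (hn : 1 < n)
    (h12 : c₁ ≠ c₂) (h13 : c₁ ≠ c₃) (h23 : c₂ ≠ c₃)
    (e1 : c₁ + c₂ + c₃ = -u) (e2 : c₁ * c₂ + c₁ * c₃ + c₂ * c₃ = -3 / (n + 2))
    (e3 : c₁ * c₂ * c₃ = u / n)
    (hk₁ : k₁ * ((c₁ - c₂) * (c₁ - c₃)) = N * (1 / n + c₂ * c₃))
    (hk₂ : k₂ * ((c₂ - c₁) * (c₂ - c₃)) = N * (1 / n + c₁ * c₃))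
    (hk₃ : k₃ * ((c₃ - c₁) * (c₃ - c₂)) = N * (1 / n + c₁ * c₂)) :
    8 * (n - 1) ^ 3 * (n + 2) * N * (k₁ * k₂ + k₁ * k₃ + k₂ * k₃) * (k₁ * k₂ * k₃) =
      ((n + 2) ^ 2 * N * (N ^ 2 - 4 * (k₁ * k₂ + k₁ * k₃ + k₂ * k₃)) + 72 * n * (k₁ * k₂ * k₃)) ^ 2
      + 4 * (4 * n - 7) * (n - 1) * ((n + 2) ^ 2 * N *
        (N ^ 2 - 4 * (k₁ * k₂ + k₁ * k₃ + k₂ * k₃)) + 72 * n * (k₁ * k₂ * k₃)) * (k₁ * k₂ * k₃)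
      + 36 * n * (3 * n - 2) * (n - 1) ^ 2 * (k₁ * k₂ * k₃) ^ 2 := by
  have hn0 : n ≠ 0 := by positivity
  have hn2 : n + 2 ≠ 0 := by positivity
  set Δ := ((c₁ - c₂) * (c₁ - c₃) * (c₂ - c₃)) ^ 2 with hΔ
  have hΔ0 : Δ ≠ 0 := by
    rw [hΔ]
    exact pow_ne_zero 2 (mul_ne_zero (mul_ne_zero (sub_ne_zero.2 h12) (sub_ne_zero.2 h13))
      (sub_ne_zero.2 h23))
  set V := (n + 2) * u ^ 2 with hV
  have disc : Δ = 4 / (n ^ 2 * (n + 2) ^ 3) *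
      (n * (n + 2) * V ^ 2 + 9 * (n ^ 2 - 3) * V + 27 * n ^ 2) := by
    have : Δ = (c₁ + c₂ + c₃) ^ 2 * (c₁ * c₂ + c₁ * c₃ + c₂ * c₃) ^ 2
        - 4 * (c₁ * c₂ + c₁ * c₃ + c₂ * c₃) ^ 3 - 4 * (c₁ + c₂ + c₃) ^ 3 * (c₁ * c₂ * c₃)
        + 18 * (c₁ + c₂ + c₃) * (c₁ * c₂ + c₁ * c₃ + c₂ * c₃) * (c₁ * c₂ * c₃)
        - 27 * (c₁ * c₂ * c₃) ^ 2 := by rw [hΔ]; ring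
    rw [this, e1, e2, e3, hV]
    field_simp
    ring
  have S3 : (k₁ * k₂ * k₃) * Δ = N ^ 3 * ((2 * n - 2) / (n ^ 3 * (n + 2))) := by
    have h1 : (k₁ * k₂ * k₃) * Δ = - ((k₁ * ((c₁ - c₂) * (c₁ - c₃))) *
        (k₂ * ((c₂ - c₁) * (c₂ - c₃))) * (k₃ * ((c₃ - c₁) * (c₃ - c₂)))) := by rw [hΔ]; ring
    have h2 : (1 / n + c₂ * c₃) * (1 / n + c₁ * c₃) * (1 / n + c₁ * c₂) =
        (1 / n) ^ 3 + (1 / n) ^ 2 * (c₁ * c₂ + c₁ * c₃ + c₂ * c₃)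
        + (1 / n) * (c₁ * c₂ * c₃) * (c₁ + c₂ + c₃) + (c₁ * c₂ * c₃) ^ 2 := by ring
    rw [e1, e2, e3] at h2
    rw [h1, hk₁, hk₂, hk₃]
    have h3 : -(N * (1 / n + c₂ * c₃) * (N * (1 / n + c₁ * c₃)) * (N * (1 / n + c₁ * c₂))) =
      -N ^ 3 * ((1 / n + c₂ * c₃) * (1 / n + c₁ * c₃) * (1 / n + c₁ * c₂)) := by ring
    rw [h3, h2]
    field_simp
    ring
  have S2 : (k₁ * k₂ + k₁ * k₃ + k₂ * k₃) * Δ = N ^ 2 *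
      ((n * V ^ 2 + (8 * n - 14) * V + (27 * n - 18)) / (n ^ 2 * (n + 2) ^ 2)) := by
    have h1 : (k₁ * k₂ + k₁ * k₃ + k₂ * k₃) * Δ =
        - ((k₁ * ((c₁ - c₂) * (c₁ - c₃))) * (k₂ * ((c₂ - c₁) * (c₂ - c₃))) *
            ((c₁ - c₃) * (c₂ - c₃))
          + (k₁ * ((c₁ - c₂) * (c₁ - c₃))) * (k₃ * ((c₃ - c₁) * (c₃ - c₂))) *
            ((c₁ - c₂) * (c₃ - c₂))
          + (k₂ * ((c₂ - c₁) * (c₂ - c₃))) * (k₃ * ((c₃ - c₁) * (c₃ - c₂))) *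
            ((c₂ - c₁) * (c₃ - c₁))) := by rw [hΔ]; ring
    rw [h1, hk₁, hk₂, hk₃]
    -- symmetric reduction through the power sums of the nodes
    have h2 : ∀ s : ℝ, (s + c₂ * c₃) * (s + c₁ * c₃) * ((c₁ - c₃) * (c₂ - c₃))
        + (s + c₂ * c₃) * (s + c₁ * c₂) * ((c₁ - c₂) * (c₃ - c₂))
        + (s + c₁ * c₃) * (s + c₁ * c₂) * ((c₂ - c₁) * (c₃ - c₁)) =
        -3 * s * ((c₁ + c₂ + c₃) ^ 4 - 4 * (c₁ + c₂ + c₃) ^ 2 * (c₁ * c₂ + c₁ * c₃ + c₂ * c₃)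
          + 2 * (c₁ * c₂ + c₁ * c₃ + c₂ * c₃) ^ 2 + 4 * (c₁ + c₂ + c₃) * (c₁ * c₂ * c₃))
        + (5 * s * (c₁ + c₂ + c₃) + 3 * (c₁ * c₂ * c₃)) * ((c₁ + c₂ + c₃) ^ 3
          - 3 * (c₁ + c₂ + c₃) * (c₁ * c₂ + c₁ * c₃ + c₂ * c₃) + 3 * (c₁ * c₂ * c₃))
        + (3 * s ^ 2 - 2 * (c₁ + c₂ + c₃) * (s * (c₁ + c₂ + c₃) + (c₁ * c₂ * c₃))
          - s * (c₁ * c₂ + c₁ * c₃ + c₂ * c₃)) * ((c₁ + c₂ + c₃) ^ 2 - 2 * (c₁ * c₂ + c₁ * c₃ + c₂ * c₃))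
        + (-2 * (c₁ + c₂ + c₃) * s ^ 2 + (c₁ * c₂ + c₁ * c₃ + c₂ * c₃) * (s * (c₁ + c₂ + c₃)
          + (c₁ * c₂ * c₃))) * (c₁ + c₂ + c₃)
        + 3 * s ^ 2 * (c₁ * c₂ + c₁ * c₃ + c₂ * c₃) := by intro s; ring
    have h3 := h2 (1 / n)
    rw [e1, e2, e3] at h3
    have h4 : (n * V ^ 2 + (8 * n - 14) * V + (27 * n - 18)) / (n ^ 2 * (n + 2) ^ 2) =
        -(-3 * (1 / n) * ((-u) ^ 4 - 4 * (-u) ^ 2 * (-3 / (n + 2)) + 2 * (-3 / (n + 2)) ^ 2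
          + 4 * (-u) * (u / n))
        + (5 * (1 / n) * (-u) + 3 * (u / n)) * ((-u) ^ 3 - 3 * (-u) * (-3 / (n + 2)) + 3 * (u / n))
        + (3 * (1 / n) ^ 2 - 2 * (-u) * (1 / n * (-u) + u / n) - 1 / n * (-3 / (n + 2)))
          * ((-u) ^ 2 - 2 * (-3 / (n + 2)))
        + (-2 * (-u) * (1 / n) ^ 2 + -3 / (n + 2) * (1 / n * (-u) + u / n)) * (-u)
        + 3 * (1 / n) ^ 2 * (-3 / (n + 2))) := by
      rw [hV]
      field_simp
      ring
    rw [h4, ← h3]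
    ring
  have SZ : ((n + 2) ^ 2 * N * (N ^ 2 - 4 * (k₁ * k₂ + k₁ * k₃ + k₂ * k₃))
      + 72 * n * (k₁ * k₂ * k₃)) * Δ =
      N ^ 3 * ((2 * n - 2) / (n ^ 3 * (n + 2))) * (2 * n * (n - 1) * V) := by
    have : ((n + 2) ^ 2 * N * (N ^ 2 - 4 * (k₁ * k₂ + k₁ * k₃ + k₂ * k₃))
      + 72 * n * (k₁ * k₂ * k₃)) * Δ = (n + 2) ^ 2 * N * (N ^ 2 * Δ
      - 4 * ((k₁ * k₂ + k₁ * k₃ + k₂ * k₃) * Δ)) + 72 * n * ((k₁ * k₂ * k₃) * Δ) := by ring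
    rw [this, S2, S3, disc]
    field_simp
    ring
  apply mul_right_cancel₀ (pow_ne_zero 2 hΔ0)
  generalize ((n + 2) ^ 2 * N * (N ^ 2 - 4 * (k₁ * k₂ + k₁ * k₃ + k₂ * k₃))
      + 72 * n * (k₁ * k₂ * k₃)) = Z at *
  generalize k₁ * k₂ + k₁ * k₃ + k₂ * k₃ = s2 at *
  generalize k₁ * k₂ * k₃ = s3 at *
  have : (Z ^ 2 + 4 * (4 * n - 7) * (n - 1) * Z * s3 + 36 * n * (3 * n - 2) * (n - 1) ^ 2 * s3 ^ 2)
      * Δ ^ 2 = (Z * Δ) ^ 2 + 4 * (4 * n - 7) * (n - 1) * (Z * Δ) * (s3 * Δ) +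
      36 * n * (3 * n - 2) * (n - 1) ^ 2 * (s3 * Δ) ^ 2 := by ring
  rw [this, SZ, S3]
  have : 8 * (n - 1) ^ 3 * (n + 2) * N * s2 * s3 * Δ ^ 2 = 8 * (n - 1) ^ 3 * (n + 2) * N *
    (s2 * Δ) * (s3 * Δ) := by ring
  rw [this, S2, S3]
  field_simp
  ring

/-- The equation of `weights_equation` for positive integers `k₁, k₂, k₃`. -/
def WeightsEq (n k₁ k₂ k₃ : ℕ) : Prop :=
  let n' : ℤ := n
  let N : ℤ := (k₁ + k₂ + k₃ : ℕ)
  let s₂ : ℤ := (k₁ * k₂ + k₁ * k₃ + k₂ * k₃ : ℕ)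
  let s₃ : ℤ := (k₁ * k₂ * k₃ : ℕ)
  8 * (n' - 1) ^ 3 * (n' + 2) * N * s₂ * s₃ =
    ((n' + 2) ^ 2 * N * (N ^ 2 - 4 * s₂) + 72 * n' * s₃) ^ 2
    + 4 * (4 * n' - 7) * (n' - 1) * ((n' + 2) ^ 2 * N * (N ^ 2 - 4 * s₂) + 72 * n' * s₃) * s₃
    + 36 * n' * (3 * n' - 2) * (n' - 1) ^ 2 * s₃ ^ 2

instance (n k₁ k₂ k₃ : ℕ) : Decidable (WeightsEq n k₁ k₂ k₃) := by
  unfold WeightsEq; infer_instance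

lemma WeightsEq.swap₁₂ {n k₁ k₂ k₃ : ℕ} (h : WeightsEq n k₁ k₂ k₃) : WeightsEq n k₂ k₁ k₃ := by
  simp only [WeightsEq] at h ⊢
  rwa [add_comm k₂ k₁, mul_comm k₂ k₁, add_right_comm (k₁ * k₂) (k₂ * k₃)]

lemma WeightsEq.swap₂₃ {n k₁ k₂ k₃ : ℕ} (h : WeightsEq n k₁ k₂ k₃) : WeightsEq n k₁ k₃ k₂ := by
  simp only [WeightsEq] at h ⊢
  rwa [add_right_comm k₁ k₃ k₂, mul_right_comm k₁ k₃ k₂, add_comm (k₁ * k₃) (k₁ * k₂),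
    mul_comm k₃ k₂]

/-- The finite search: for `3 ≤ n ≤ 8` the weights equation has no solution in positive integers
`k₁ ≤ k₂ ≤ k₃` with `k₁ + k₂ + k₃ = C(n + 3, 3)`. The values of this binomial coefficient are
tabulated, and `k₁ = a + 1`, `k₂ = a + 1 + b`. -/
lemma no_weights_search : ∀ p ∈ [(3, 20), (4, 35), (5, 56), (6, 84), (7, 120), (8, 165)],
    ∀ a < p.2 / 3, ∀ b < (p.2 - 3 * a - 1) / 2,
    ¬ WeightsEq p.1 (a + 1) (a + 1 + b) (p.2 - (2 * a + b + 2)) := by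
  decide +kernel

lemma no_weights_sorted {n k₁ k₂ k₃ : ℕ} (hn3 : 3 ≤ n) (hn8 : n ≤ 8) (h₁ : 1 ≤ k₁)
    (h₁₂ : k₁ ≤ k₂) (h₂₃ : k₂ ≤ k₃) (hN : k₁ + k₂ + k₃ = (n + 3).choose 3) :
    ¬ WeightsEq n k₁ k₂ k₃ := by
  have hmem : (n, (n + 3).choose 3) ∈
      [(3, 20), (4, 35), (5, 56), (6, 84), (7, 120), (8, 165)] := by
    interval_cases n <;> decide
  obtain ⟨a, rfl⟩ := Nat.exists_eq_add_of_le' h₁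
  obtain ⟨b, rfl⟩ := Nat.exists_eq_add_of_le h₁₂
  have h := no_weights_search _ hmem a (by simp only; omega) b (by simp only; omega)
  simp only at h
  rwa [show (n + 3).choose 3 - (2 * a + b + 2) = k₃ by omega] at h

lemma no_weights {n k₁ k₂ k₃ : ℕ} (hn3 : 3 ≤ n) (hn8 : n ≤ 8) (h₁ : 1 ≤ k₁) (h₂ : 1 ≤ k₂)
    (h₃ : 1 ≤ k₃) (hN : k₁ + k₂ + k₃ = (n + 3).choose 3) : ¬ WeightsEq n k₁ k₂ k₃ := by
  intro h
  rcases le_total k₁ k₂ with h12 | h12 <;> rcases le_total k₂ k₃ with h23 | h23 <;>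
    rcases le_total k₁ k₃ with h13 | h13
  · exact no_weights_sorted hn3 hn8 h₁ h12 h23 hN h
  · exact no_weights_sorted hn3 hn8 h₁ h12 h23 hN h
  · exact no_weights_sorted hn3 hn8 h₁ h13 h23 (by omega) h.swap₂₃
  · exact no_weights_sorted hn3 hn8 h₃ h13 h12 (by omega) h.swap₂₃.swap₁₂
  · exact no_weights_sorted hn3 hn8 h₂ h12 h13 (by omega) h.swap₁₂
  · exact no_weights_sorted hn3 hn8 h₂ h23 h13 (by omega) h.swap₁₂.swap₂₃
  · exact no_weights_sorted hn3 hn8 h₃ h23 h12 (by omega) h.swap₁₂.swap₂₃.swap₁₂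
  · exact no_weights_sorted hn3 hn8 h₃ h23 h12 (by omega) h.swap₁₂.swap₂₃.swap₁₂

/-! ### Multiplicities of the cosines -/

/-- The values `c y`, `y ∈ Y`, have the first four moments of the cosine of the angle between a
fixed direction and a uniformly distributed direction in `ℝⁿ`. -/
structure CosMoments {α : Type*} (n : ℕ) (Y : Finset α) (c : α → ℝ) : Prop where
  one : ∑ y ∈ Y, c y = 0
  two : ∑ y ∈ Y, c y ^ 2 = #Y * (1 / n)
  three : ∑ y ∈ Y, c y ^ 3 = 0
  four : ∑ y ∈ Y, c y ^ 4 = #Y * (3 / (n * (n + 2)))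

namespace CosMoments

variable {α : Type*} {n : ℕ} {Y : Finset α} {c : α → ℝ}

/-- Two values never suffice: the fourth moment is too large for a two-point distribution. -/
lemma exists_ne (h : CosMoments n Y c) (hn : 1 < n) (hY : Y.Nonempty) (a b : ℝ) :
    ∃ y ∈ Y, c y ≠ a ∧ c y ≠ b := by
  by_contra! hcon
  have h0 : ∑ y ∈ Y, ((c y - a) * (c y - b)) ^ 2 = 0 := by
    refine Finset.sum_eq_zero fun y hy => ?_
    by_cases hya : c y = a
    · simp [hya]
    · simp [hcon y hy hya]
  have h1 : ∑ y ∈ Y, ((c y - a) * (c y - b)) ^ 2 = ∑ y ∈ Y, c y ^ 4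
      - 2 * (a + b) * ∑ y ∈ Y, c y ^ 3 + ((a + b) ^ 2 + 2 * a * b) * ∑ y ∈ Y, c y ^ 2
      - 2 * (a * b) * (a + b) * ∑ y ∈ Y, c y + #Y * (a * b) ^ 2 := by
    rw [← nsmul_eq_mul, ← Finset.sum_const]
    simp only [Finset.mul_sum, ← Finset.sum_add_distrib, ← Finset.sum_sub_distrib]
    exact Finset.sum_congr rfl fun y _ => by ring
  rw [h.one, h.two, h.three, h.four] at h1
  have hn' : (1 : ℝ) < n := by exact_mod_cast hn
  have h2 : ∑ y ∈ Y, ((c y - a) * (c y - b)) ^ 2 =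
      #Y * (2 * (n - 1) / (n ^ 2 * (n + 2)) + (a + b) ^ 2 / n + (a * b + 1 / n) ^ 2) := by
    rw [h1]
    field_simp
    ring
  have hc : (0 : ℝ) < #Y := by exact_mod_cast hY.card_pos
  have h3 : 0 < 2 * ((n : ℝ) - 1) / (n ^ 2 * (n + 2)) := by
    have : (0 : ℝ) < n - 1 := by linarith
    positivity
  have : 0 < ∑ y ∈ Y, ((c y - a) * (c y - b)) ^ 2 := by rw [h2]; positivity
  exact this.ne' h0

/-- The multiplicities of three values are determined by the first two moments, by integrating
the Lagrange interpolation polynomials. -/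
lemma card_mul (h : CosMoments n Y c) {c₁ c₂ c₃ : ℝ}
    (hc : ∀ y ∈ Y, c y = c₁ ∨ c y = c₂ ∨ c y = c₃) :
    (#{y ∈ Y | c y = c₁} : ℝ) * ((c₁ - c₂) * (c₁ - c₃)) = #Y * (1 / n + c₂ * c₃) := by
  have h1 : ∑ y ∈ Y, (c y - c₂) * (c y - c₃) = #Y * (1 / n + c₂ * c₃) := by
    have : ∑ y ∈ Y, (c y - c₂) * (c y - c₃) = ∑ y ∈ Y, c y ^ 2 - (c₂ + c₃) * ∑ y ∈ Y, c y
        + #Y * (c₂ * c₃) := by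
      rw [← nsmul_eq_mul, ← Finset.sum_const]
      simp only [Finset.mul_sum, ← Finset.sum_add_distrib, ← Finset.sum_sub_distrib]
      exact Finset.sum_congr rfl fun y _ => by ring
    rw [this, h.one, h.two]
    ring
  rw [← h1, ← nsmul_eq_mul, ← Finset.sum_const, Finset.sum_filter]
  refine Finset.sum_congr rfl fun y hy => ?_
  split_ifs with hy1
  · rw [hy1]
  · rcases hc y hy with h' | h' | h'
    · exact absurd h' hy1
    · simp [h']
    · simp [h']

lemma sum_card {c₁ c₂ c₃ : ℝ} (h12 : c₁ ≠ c₂) (h13 : c₁ ≠ c₃) (h23 : c₂ ≠ c₃)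
    (hc : ∀ y ∈ Y, c y = c₁ ∨ c y = c₂ ∨ c y = c₃) :
    #{y ∈ Y | c y = c₁} + #{y ∈ Y | c y = c₂} + #{y ∈ Y | c y = c₃} = #Y := by
  rw [Finset.card_eq_sum_ones Y, Finset.card_filter, Finset.card_filter, Finset.card_filter,
    ← Finset.sum_add_distrib, ← Finset.sum_add_distrib]
  refine Finset.sum_congr rfl fun y hy => ?_
  rcases hc y hy with h | h | h <;> simp [h, h12, h13, h23, h12.symm, h13.symm, h23.symm]

end CosMoments

/-- Vieta's formulas for a monic cubic with three distinct roots. -/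
lemma vieta_cubic {p q s c₁ c₂ c₃ : ℝ} (h12 : c₁ ≠ c₂) (h13 : c₁ ≠ c₃) (h23 : c₂ ≠ c₃)
    (h1 : c₁ ^ 3 + p * c₁ ^ 2 + q * c₁ + s = 0) (h2 : c₂ ^ 3 + p * c₂ ^ 2 + q * c₂ + s = 0)
    (h3 : c₃ ^ 3 + p * c₃ ^ 2 + q * c₃ + s = 0) :
    c₁ + c₂ + c₃ = -p ∧ c₁ * c₂ + c₁ * c₃ + c₂ * c₃ = q ∧ c₁ * c₂ * c₃ = -s := by
  have a12 : c₁ ^ 2 + c₁ * c₂ + c₂ ^ 2 + p * (c₁ + c₂) + q = 0 :=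
    mul_left_cancel₀ (sub_ne_zero.2 h12) (by linear_combination h1 - h2)
  have a13 : c₁ ^ 2 + c₁ * c₃ + c₃ ^ 2 + p * (c₁ + c₃) + q = 0 :=
    mul_left_cancel₀ (sub_ne_zero.2 h13) (by linear_combination h1 - h3)
  have e1 : c₁ + c₂ + c₃ + p = 0 :=
    mul_left_cancel₀ (sub_ne_zero.2 h23) (by linear_combination a12 - a13)
  have e2 : c₁ * c₂ + c₁ * c₃ + c₂ * c₃ = q := by linear_combination (c₁ + c₂) * e1 - a12
  exact ⟨by linarith, e2, by linear_combination h1 + c₁ * e2 - c₁ ^ 2 * e1⟩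

/-- The combinatorial core: two nonempty finite sets whose cross cosines all are roots of one
cubic and have the moments of the uniform distribution from either side. -/
lemma cross_contradiction {α : Type*} {n : ℕ} (hn3 : 3 ≤ n) (hn8 : n ≤ 8) {X₁ X₂ : Finset α}
    (hX₁ : X₁.Nonempty) (hX₂ : X₂.Nonempty) (hcard : #X₁ + #X₂ = (n + 3).choose 3)
    {u : ℝ} {c : α → α → ℝ}
    (hc : ∀ x ∈ X₁, ∀ y ∈ X₂, c x y ^ 3 + u * c x y ^ 2 + (-3 / (n + 2)) * c x y + -(u / n) = 0)
    (h2 : ∀ x ∈ X₁, CosMoments n X₂ (c x)) (h1 : ∀ y ∈ X₂, CosMoments n X₁ fun x => c x y) :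
    False := by
  obtain ⟨x, hx⟩ := hX₁
  have hn1 : 1 < n := by omega
  obtain ⟨y₁, hy₁, -, -⟩ := (h2 x hx).exists_ne hn1 hX₂ 0 0
  obtain ⟨y₂, hy₂, h12, -⟩ := (h2 x hx).exists_ne hn1 hX₂ (c x y₁) (c x y₁)
  obtain ⟨y₃, hy₃, h13, h23⟩ := (h2 x hx).exists_ne hn1 hX₂ (c x y₁) (c x y₂)
  have hpos : ∀ y ∈ X₂, 1 ≤ #{z ∈ X₂ | c x z = c x y} := fun y hy =>
    Finset.card_pos.2 ⟨y, by simp [hy]⟩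
  have hp₁ := hpos y₁ hy₁
  have hp₂ := hpos y₂ hy₂
  have hp₃ := hpos y₃ hy₃
  have r₁ := hc x hx y₁ hy₁
  have r₂ := hc x hx y₂ hy₂
  have r₃ := hc x hx y₃ hy₃
  generalize c x y₁ = c₁ at *
  generalize c x y₂ = c₂ at *
  generalize c x y₃ = c₃ at *
  obtain ⟨e1, e2, e3⟩ := vieta_cubic h12.symm h13.symm h23.symm r₁ r₂ r₃
  have hval : ∀ x ∈ X₁, ∀ y ∈ X₂, c x y = c₁ ∨ c x y = c₂ ∨ c x y = c₃ := by
    intro x hx y hy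
    have h := hc x hx y hy
    have : (c x y - c₁) * ((c x y - c₂) * (c x y - c₃)) = 0 := by
      linear_combination h - c x y ^ 2 * e1 + c x y * e2 - e3
    simpa [sub_eq_zero] using this
  have hv2 := hval x hx
  have hv1 : ∀ z ∈ X₁, c z y₁ = c₁ ∨ c z y₁ = c₂ ∨ c z y₁ = c₃ := fun z hz => hval z hz y₁ hy₁
  have p12 : ∀ {a b d : Prop}, a ∨ b ∨ d → b ∨ a ∨ d := by tauto
  have p13 : ∀ {a b d : Prop}, a ∨ b ∨ d → d ∨ a ∨ b := by tauto
  have m2 := h2 x hx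
  have m1 := h1 y₁ hy₁
  have a₁ := m2.card_mul hv2
  have a₂ := m2.card_mul fun y hy => p12 (hv2 y hy)
  have a₃ := m2.card_mul fun y hy => p13 (hv2 y hy)
  have b₁ := m1.card_mul hv1
  have b₂ := m1.card_mul fun y hy => p12 (hv1 y hy)
  have b₃ := m1.card_mul fun y hy => p13 (hv1 y hy)
  have s2 := CosMoments.sum_card h12.symm h13.symm h23.symm hv2
  have s1 := CosMoments.sum_card h12.symm h13.symm h23.symm hv1
  set k₁ := #{z ∈ X₂ | c x z = c₁} + #{z ∈ X₁ | c z y₁ = c₁} with hk₁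
  set k₂ := #{z ∈ X₂ | c x z = c₂} + #{z ∈ X₁ | c z y₁ = c₂} with hk₂
  set k₃ := #{z ∈ X₂ | c x z = c₃} + #{z ∈ X₁ | c z y₁ = c₃} with hk₃
  have hsum : k₁ + k₂ + k₃ = (n + 3).choose 3 := by omega
  refine no_weights hn3 hn8 (k₁ := k₁) (k₂ := k₂) (k₃ := k₃) (by omega) (by omega) (by omega) hsum
    ?_
  have hsum' : k₁ + k₂ + k₃ = #X₂ + #X₁ := by omega
  have key := weights_equation (n := n) (N := (k₁ + k₂ + k₃ : ℕ)) (k₁ := k₁) (k₂ := k₂) (k₃ := k₃)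
    (by exact_mod_cast hn1) h12.symm h13.symm h23.symm e1 e2 (by linarith)
    (by rw [hsum', hk₁]; push_cast; linear_combination a₁ + b₁)
    (by rw [hsum', hk₂]; push_cast; linear_combination a₂ + b₂)
    (by rw [hsum', hk₃]; push_cast; linear_combination a₃ + b₃)
  simp only [WeightsEq]
  exact_mod_cast key

/-! ### The reproducing kernel on two spheres -/

/-- The total weight of the points of norm `r`. -/
def shellWeight {n : ℕ} (X : Finset (Euc n)) (w : Euc n → ℝ) (r : ℝ) : ℝ :=
  ∑ x ∈ X with ‖x‖ = r, w x

/-- A Euclidean `6`-design on two spheres of positive radii, with the spherical averages expressed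
through invariant probability measures. -/
structure TwoShell (n : ℕ) (X : Finset (Euc n)) (w : Euc n → ℝ) (r₁ r₂ : ℝ)
    (ν₁ ν₂ : Measure (Euc n)) : Prop where
  pos₁ : 0 < r₁
  pos₂ : 0 < r₂
  ne : r₁ ≠ r₂
  w_pos : ∀ x ∈ X, 0 < w x
  norm_eq : ∀ x ∈ X, ‖x‖ = r₁ ∨ ‖x‖ = r₂
  weight_pos₁ : 0 < shellWeight X w r₁
  weight_pos₂ : 0 < shellWeight X w r₂
  prob₁ : IsSphereProb n r₁ ν₁
  prob₂ : IsSphereProb n r₂ ν₂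
  design : ∀ p : MvPolynomial (Fin n) ℝ, p.totalDegree ≤ 6 →
    shellWeight X w r₁ * ∫ y, evalPt y p ∂ν₁ + shellWeight X w r₂ * ∫ y, evalPt y p ∂ν₂ =
      ∑ x ∈ X, w x * evalPt x p

namespace TwoShell

variable {n : ℕ} {X : Finset (Euc n)} {w : Euc n → ℝ} {r₁ r₂ : ℝ} {ν₁ ν₂ : Measure (Euc n)}

lemma symm (h : TwoShell n X w r₁ r₂ ν₁ ν₂) : TwoShell n X w r₂ r₁ ν₂ ν₁ where
  pos₁ := h.pos₂
  pos₂ := h.pos₁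
  ne := h.ne.symm
  w_pos := h.w_pos
  norm_eq x hx := (h.norm_eq x hx).symm
  weight_pos₁ := h.weight_pos₂
  weight_pos₂ := h.weight_pos₁
  prob₁ := h.prob₂
  prob₂ := h.prob₁
  design p hp := by rw [add_comm, h.design p hp]

/-- The cubature formula turns the polynomial `kernPoly` into a reproducing kernel for the
cubic polynomials on the first sphere, with the points of the design as nodes. -/
lemma reproducing (h : TwoShell n X w r₁ r₂ ν₁ ν₂) (hn : 0 < n) :
    ∃ a b c : ℝ, a ≠ 0 ∧ ∀ x : Euc n, ‖x‖ = r₁ → ∀ f : MvPolynomial (Fin n) ℝ,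
      f.totalDegree ≤ 3 →
      evalPt x f = ∑ y ∈ X, w y * (evalPt y (kernPoly x a b c (r₂ ^ 2)) * evalPt y f) := by
  set W₁ := shellWeight X w r₁
  set W₂ := shellWeight X w r₂
  have hW₁ : 0 < W₁ := h.weight_pos₁
  have hW₂ : 0 < W₂ := h.weight_pos₂
  have hr₁ := h.pos₁
  have hr₂ := h.pos₂
  have hn' : (0 : ℝ) < n := by exact_mod_cast hn
  have hsq : r₁ ^ 2 - r₂ ^ 2 ≠ 0 := by
    have : (r₁ - r₂) * (r₁ + r₂) ≠ 0 := mul_ne_zero (sub_ne_zero.2 h.ne) (by positivity)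
    intro h0
    exact this (by linear_combination h0)
  set A := W₁ * (6 * r₁ ^ 6 / (n * (n + 2) * (n + 4))) + W₂ * (6 * r₂ ^ 6 / (n * (n + 2) * (n + 4)))
    with hA
  set B := W₁ * (2 * r₁ ^ 4 / (n * (n + 2))) + W₂ * (2 * r₂ ^ 4 / (n * (n + 2))) with hB
  have hA0 : A ≠ 0 := by positivity
  have hB0 : B ≠ 0 := by positivity
  refine ⟨A⁻¹, B⁻¹, (W₁ * (r₁ ^ 2 - r₂ ^ 2))⁻¹, inv_ne_zero hA0, fun x hx f hf => ?_⟩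
  set K := kernPoly x A⁻¹ B⁻¹ (W₁ * (r₁ ^ 2 - r₂ ^ 2))⁻¹ (r₂ ^ 2) with hK
  let φ : MvPolynomial (Fin n) ℝ →ₗ[ℝ] ℝ :=
    { toFun := fun p => evalPt x p - ∑ y ∈ X, w y * (evalPt y K * evalPt y p)
      map_add' := fun p q => by
        simp only [evalPt_add, mul_add, Finset.sum_add_distrib]; ring
      map_smul' := fun t p => by
        simp only [evalPt_smul, RingHom.id_apply, smul_eq_mul, mul_sub, Finset.mul_sum]
        congr 1
        exact Finset.sum_congr rfl fun y _ => by ring }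
  have hxx : inner ℝ x x = r₁ ^ 2 := by rw [real_inner_self_eq_norm_sq, hx]
  suffices hφ : φ f = 0 from sub_eq_zero.1 hφ
  refine eq_zero_of_cubes φ (fun t z => sub_eq_zero.2 ?_) hf
  have hd := h.design (K * affPoly t z ^ 3) (degree_mul_le (degree_kernPoly _ _ _ _ _)
    (degree_pow_le (degree_aff t z) le_rfl) (by norm_num))
  simp only [evalPt_mul, evalPt_pow, evalPt_aff] at hd ⊢
  rw [← hd]
  simp only [hK, evalPt_kernPoly]
  rw [h.prob₁.integral_kern hn, h.prob₂.integral_kern hn, hxx, real_inner_comm x z]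
  generalize inner ℝ x z = s
  generalize inner ℝ z z = q
  have e₁ : ∀ P : ℝ, W₁ * (A⁻¹ * (6 * r₁ ^ 6 / (n * (n + 2) * (n + 4)) * P)) +
      W₂ * (A⁻¹ * (6 * r₂ ^ 6 / (n * (n + 2) * (n + 4)) * P)) = P := by
    intro P
    have : W₁ * (A⁻¹ * (6 * r₁ ^ 6 / (n * (n + 2) * (n + 4)) * P)) +
      W₂ * (A⁻¹ * (6 * r₂ ^ 6 / (n * (n + 2) * (n + 4)) * P)) = A⁻¹ * A * P := by rw [hA]; ring
    rw [this, inv_mul_cancel₀ hA0, one_mul]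
  have e₂ : ∀ P : ℝ, W₁ * (B⁻¹ * (3 * t * (2 * r₁ ^ 4 / (n * (n + 2)) * P))) +
      W₂ * (B⁻¹ * (3 * t * (2 * r₂ ^ 4 / (n * (n + 2)) * P))) = 3 * t * P := by
    intro P
    have : W₁ * (B⁻¹ * (3 * t * (2 * r₁ ^ 4 / (n * (n + 2)) * P))) +
      W₂ * (B⁻¹ * (3 * t * (2 * r₂ ^ 4 / (n * (n + 2)) * P))) = B⁻¹ * B * (3 * t * P) := by
      rw [hB]; ring
    rw [this, inv_mul_cancel₀ hB0, one_mul]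
  have e₃ : ∀ P : ℝ, W₁ * ((r₁ ^ 2 - r₂ ^ 2) * (W₁ * (r₁ ^ 2 - r₂ ^ 2))⁻¹ * P) = P := by
    intro P
    field_simp
  have E₁ := e₁ (s ^ 3 - 3 / (n + 2) * r₁ ^ 2 * q * s)
  have E₂ := e₂ (s ^ 2 - r₁ ^ 2 * q / n)
  have E₃ := e₃ (n / r₁ ^ 2 * (3 * t ^ 2 * (r₁ ^ 2 / n * s) + 3 * r₁ ^ 4 / (n * (n + 2)) * (q * s))
    + (t ^ 3 + 3 * t * (r₁ ^ 2 / n * q)))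
  have E₄ : (t + s) ^ 3 = (s ^ 3 - 3 / (n + 2) * r₁ ^ 2 * q * s)
      + 3 * t * (s ^ 2 - r₁ ^ 2 * q / n)
      + (n / r₁ ^ 2 * (3 * t ^ 2 * (r₁ ^ 2 / n * s) + 3 * r₁ ^ 4 / (n * (n + 2)) * (q * s))
      + (t ^ 3 + 3 * t * (r₁ ^ 2 / n * q))) := by
    field_simp
    ring
  linear_combination E₄ - E₁ - E₂ - E₃

/-- A weighted power sum over the first shell alone: multiplying by a quadratic polynomial that
vanishes on the second sphere separates the two shells. -/
lemma shell_moment (h : TwoShell n X w r₁ r₂ ν₁ ν₂) (x : Euc n) {k : ℕ} (hk : k ≤ 4) :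
    ∑ y ∈ X with ‖y‖ = r₁, w y * inner ℝ x y ^ k =
      shellWeight X w r₁ * ∫ y, inner ℝ x y ^ k ∂ν₁ := by
  have hsq : r₁ ^ 2 - r₂ ^ 2 ≠ 0 := by
    have hr₁ := h.pos₁
    have hr₂ := h.pos₂
    have : (r₁ - r₂) * (r₁ + r₂) ≠ 0 := mul_ne_zero (sub_ne_zero.2 h.ne) (by positivity)
    intro h0
    exact this (by linear_combination h0)
  have hd := h.design ((nsqPoly n - MvPolynomial.C (r₂ ^ 2)) * linPoly x ^ k)
    (degree_mul_le (degree_sub_le degree_nsq (degree_C_le _ _))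
      (degree_pow_le (degree_lin x) le_rfl) (by omega))
  simp only [evalPt_mul, evalPt_sub, evalPt_nsq, evalPt_C, evalPt_pow, evalPt_lin] at hd
  rw [h.prob₁.integral_congr_sphere (g := fun y => (r₁ ^ 2 - r₂ ^ 2) * inner ℝ x y ^ k)
      fun y hy => by simp only [real_inner_self_eq_norm_sq, hy],
    h.prob₂.integral_congr_sphere (g := fun y => 0)
      fun y hy => by simp only [real_inner_self_eq_norm_sq, hy, sub_self, zero_mul],
    integral_const_mul, integral_zero, mul_zero, add_zero] at hd
  have hs : ∑ y ∈ X, w y * ((inner ℝ y y - r₂ ^ 2) * inner ℝ x y ^ k) =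
      (r₁ ^ 2 - r₂ ^ 2) * ∑ y ∈ X with ‖y‖ = r₁, w y * inner ℝ x y ^ k := by
    rw [Finset.mul_sum, Finset.sum_filter]
    refine Finset.sum_congr rfl fun y hy => ?_
    rw [real_inner_self_eq_norm_sq]
    split_ifs with h1
    · rw [h1]; ring
    · rw [(h.norm_eq y hy).resolve_left h1]; ring
  rw [hs] at hd
  exact mul_left_cancel₀ hsq (by linear_combination -hd)

end TwoShell

/-! ### Consequences of interpolation -/

/-- The points of `X` can be interpolated by cubic polynomials. -/
def Interpolates {n : ℕ} (X : Finset (Euc n)) : Prop :=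
  ∀ x ∈ X, ∃ f : MvPolynomial (Fin n) ℝ, f.totalDegree ≤ 3 ∧ evalPt x f = 1 ∧
    ∀ y ∈ X, y ≠ x → evalPt y f = 0

namespace TwoShell

variable {n : ℕ} {X : Finset (Euc n)} {w : Euc n → ℝ} {r₁ r₂ : ℝ} {ν₁ ν₂ : Measure (Euc n)}

/-- Applied to interpolation polynomials, the reproducing property says that the weights are the
inverses of the diagonal values of the kernel and that the off-diagonal values vanish. -/
lemma kernel_values (h : TwoShell n X w r₁ r₂ ν₁ ν₂) (hn : 0 < n) (hX : Interpolates X) :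
    ∃ a b c : ℝ, a ≠ 0 ∧ ∀ x ∈ X, ‖x‖ = r₁ →
      w x * evalPt x (kernPoly x a b c (r₂ ^ 2)) = 1 ∧
      ∀ y ∈ X, y ≠ x → evalPt y (kernPoly x a b c (r₂ ^ 2)) = 0 := by
  obtain ⟨a, b, c, ha, hrep⟩ := h.reproducing hn
  have key : ∀ x ∈ X, ‖x‖ = r₁ → ∀ y ∈ X, ∃ f : MvPolynomial (Fin n) ℝ,
      evalPt x f = w y * evalPt y (kernPoly x a b c (r₂ ^ 2)) ∧ evalPt y f = 1 ∧
      ∀ z ∈ X, z ≠ y → evalPt z f = 0 := by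
    intro x hx hxr y hy
    obtain ⟨f, hf, hf1, hf0⟩ := hX y hy
    refine ⟨f, ?_, hf1, hf0⟩
    rw [hrep x hxr f hf, Finset.sum_eq_single_of_mem y hy fun z hz hzy => by simp [hf0 z hz hzy],
      hf1, mul_one]
  refine ⟨a, b, c, ha, fun x hx hxr => ⟨?_, fun y hy hyx => ?_⟩⟩
  · obtain ⟨f, e1, e2, -⟩ := key x hx hxr x hx
    rw [← e1, e2]
  · obtain ⟨f, e1, -, e3⟩ := key x hx hxr y hy
    rw [e3 x hx hyx.symm, eq_comm, mul_eq_zero] at e1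
    exact e1.resolve_left (h.w_pos y hy).ne'

lemma exists_weight (h : TwoShell n X w r₁ r₂ ν₁ ν₂) (hn : 0 < n) (hX : Interpolates X) :
    ∃ κ : ℝ, ∀ x ∈ X, ‖x‖ = r₁ → w x = κ := by
  obtain ⟨a, b, c, -, hK⟩ := h.kernel_values hn hX
  refine ⟨(a * ((r₁ ^ 2) ^ 3 - 3 / (n + 2) * r₁ ^ 2 * r₁ ^ 2 * r₁ ^ 2)
        + b * ((r₁ ^ 2) ^ 2 - r₁ ^ 2 * r₁ ^ 2 / n)
        + (r₁ ^ 2 - r₂ ^ 2) * c * (n / r₁ ^ 2 * r₁ ^ 2 + 1))⁻¹, fun x hx hxr => ?_⟩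
  have h1 := (hK x hx hxr).1
  rw [evalPt_kernPoly, real_inner_self_eq_norm_sq, hxr] at h1
  exact eq_inv_of_mul_eq_one_left h1

/-- Cosines between the two shells are roots of one common cubic polynomial. -/
lemma exists_cubic (h : TwoShell n X w r₁ r₂ ν₁ ν₂) (hn : 0 < n) (hX : Interpolates X) :
    ∃ u : ℝ, ∀ x ∈ X, ‖x‖ = r₁ → ∀ y ∈ X, ‖y‖ = r₂ →
      (inner ℝ x y / (r₁ * r₂)) ^ 3 + u * (inner ℝ x y / (r₁ * r₂)) ^ 2
        + (-3 / (n + 2)) * (inner ℝ x y / (r₁ * r₂)) + -(u / n) = 0 := by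
  obtain ⟨a, b, c, ha, hK⟩ := h.kernel_values hn hX
  refine ⟨b / (a * (r₁ * r₂)), fun x hx hxr y hy hyr => ?_⟩
  have hxy : y ≠ x := fun e => h.ne (by rw [← hxr, ← hyr, e])
  have h1 := (hK x hx hxr).2 y hy hxy
  rw [evalPt_kernPoly, real_inner_self_eq_norm_sq, real_inner_self_eq_norm_sq, hxr, hyr] at h1
  have hr₁ := h.pos₁.ne'
  have hr₂ := h.pos₂.ne'
  have hn' : (n : ℝ) ≠ 0 := by exact_mod_cast hn.ne'
  have hn2 : (n : ℝ) + 2 ≠ 0 := by positivity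
  generalize inner ℝ x y = s at *
  have h2 : (s / (r₁ * r₂)) ^ 3 + b / (a * (r₁ * r₂)) * (s / (r₁ * r₂)) ^ 2
        + (-3 / (n + 2)) * (s / (r₁ * r₂)) + -(b / (a * (r₁ * r₂)) / n) =
      (a * (r₁ * r₂) ^ 3)⁻¹ * (a * (s ^ 3 - 3 / (n + 2) * r₁ ^ 2 * r₂ ^ 2 * s)
        + b * (s ^ 2 - r₁ ^ 2 * r₂ ^ 2 / n)
        + (r₂ ^ 2 - r₂ ^ 2) * c * (n / r₁ ^ 2 * s + 1)) := by
    rw [sub_self]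
    field_simp
    ring
  rw [h2, h1, mul_zero]

lemma cosMoments (h : TwoShell n X w r₁ r₂ ν₁ ν₂) (hn : 0 < n) (hX : Interpolates X) {x : Euc n}
    (hx : ‖x‖ = r₂) :
    CosMoments n {y ∈ X | ‖y‖ = r₁} fun y => inner ℝ x y / (r₁ * r₂) := by
  obtain ⟨κ, hκ⟩ := h.exists_weight hn hX
  have hW : shellWeight X w r₁ = #{y ∈ X | ‖y‖ = r₁} * κ := by
    rw [shellWeight, ← nsmul_eq_mul, ← Finset.sum_const]
    refine Finset.sum_congr rfl fun y hy => ?_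
    rw [Finset.mem_filter] at hy
    exact hκ y hy.1 hy.2
  have hκ0 : κ ≠ 0 := by
    rintro rfl
    rw [mul_zero] at hW
    exact h.weight_pos₁.ne' hW
  have hr₁ := h.pos₁.ne'
  have hr₂ := h.pos₂.ne'
  have hn' : (n : ℝ) ≠ 0 := by exact_mod_cast hn.ne'
  have key : ∀ k ≤ 4, ∑ y ∈ X with ‖y‖ = r₁, (inner ℝ x y / (r₁ * r₂)) ^ k =
      #{y ∈ X | ‖y‖ = r₁} * ((∫ y, inner ℝ x y ^ k ∂ν₁) / (r₁ * r₂) ^ k) := by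
    intro k hk
    have h1 := h.shell_moment x hk
    rw [hW] at h1
    have h2 : ∑ y ∈ X with ‖y‖ = r₁, w y * inner ℝ x y ^ k =
        κ * ∑ y ∈ X with ‖y‖ = r₁, inner ℝ x y ^ k := by
      rw [Finset.mul_sum]
      refine Finset.sum_congr rfl fun y hy => ?_
      rw [Finset.mem_filter] at hy
      rw [hκ y hy.1 hy.2]
    rw [h2] at h1
    simp only [div_pow, ← Finset.sum_div]
    rw [mul_left_cancel₀ hκ0 (h1.trans (by ring :
      _ = κ * (#{y ∈ X | ‖y‖ = r₁} * ∫ y, inner ℝ x y ^ k ∂ν₁))), mul_div_assoc]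
  obtain ⟨m2, m4, -⟩ := h.prob₁.moments hn x
  rw [real_inner_self_eq_norm_sq, hx] at m2 m4
  constructor
  · have := key 1 (by norm_num)
    rw [h.prob₁.integral_odd (fun y => by rw [inner_neg_right]; ring)] at this
    simpa using this
  · rw [key 2 (by norm_num), m2]
    field_simp
  · rw [key 3 (by norm_num), h.prob₁.integral_odd (fun y => by rw [inner_neg_right]; ring)]
    simp
  · rw [key 4 (by norm_num), m4]
    field_simp

lemma shell_nonempty (h : TwoShell n X w r₁ r₂ ν₁ ν₂) :
    ({y ∈ X | ‖y‖ = r₁} : Finset (Euc n)).Nonempty := by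
  refine Finset.nonempty_of_sum_ne_zero (f := w) ?_
  exact h.weight_pos₁.ne'

lemma card_shells (h : TwoShell n X w r₁ r₂ ν₁ ν₂) :
    #{y ∈ X | ‖y‖ = r₁} + #{y ∈ X | ‖y‖ = r₂} = #X := by
  rw [← Finset.card_filter_add_card_filter_not (s := X) fun y => ‖y‖ = r₁]
  congr 2
  refine Finset.filter_congr fun y hy => ⟨fun e e' => h.ne (e'.symm.trans e), fun e =>
    (h.norm_eq y hy).resolve_left e⟩

lemma contradiction (h : TwoShell n X w r₁ r₂ ν₁ ν₂) (hn3 : 3 ≤ n) (hn8 : n ≤ 8)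
    (hX : Interpolates X) (hcard : #X = (n + 3).choose 3) : False := by
  have hn : 0 < n := by omega
  obtain ⟨u, hu⟩ := h.exists_cubic hn hX
  refine cross_contradiction hn3 hn8 h.shell_nonempty h.symm.shell_nonempty
    (h.card_shells.trans hcard) (u := u) (c := fun x y => inner ℝ x y / (r₁ * r₂)) ?_ ?_ ?_
  · intro x hx y hy
    rw [Finset.mem_filter] at hx hy
    exact hu x hx.1 hx.2 y hy.1 hy.2
  · intro x hx
    rw [Finset.mem_filter] at hx
    rw [mul_comm r₁ r₂]
    exact h.symm.cosMoments hn hX hx.2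
  · intro y hy
    rw [Finset.mem_filter] at hy
    have := h.cosMoments hn hX hy.2
    simpa only [real_inner_comm] using this

end TwoShell

/-! ### Restrictions of cubic polynomials -/

section Restriction

open MvPolynomial

variable {n : ℕ} {S : Set (Euc n)}

lemma finite_polOn : Module.Finite ℝ (PolOn n 3 S) := by
  have := (finrank_restrictTotalDegree_le (n := n)).1
  exact inferInstanceAs (Module.Finite ℝ ((restrictTotalDegree (Fin n) ℝ 3).map (polyRestrict n S)))

/-- If the restrictions of cubic polynomials to `S` span a space of full dimension, a cubic
polynomial vanishing on `S` is zero. -/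
lemma eq_zero_of_vanish (hS : dimPolOn n 3 S = (n + 3).choose 3) {p : MvPolynomial (Fin n) ℝ}
    (hp : p.totalDegree ≤ 3) (h0 : ∀ s ∈ S, evalPt s p = 0) : p = 0 := by
  obtain ⟨hfin, hle⟩ := finrank_restrictTotalDegree_le (n := n)
  set L := (polyRestrict n S).domRestrict (restrictTotalDegree (Fin n) ℝ 3) with hL
  have hrange : Module.finrank ℝ (LinearMap.range L) = (n + 3).choose 3 := by
    rw [hL, LinearMap.range_domRestrict]
    exact hS
  have hker := L.finrank_range_add_finrank_ker
  have hk0 : Module.finrank ℝ (LinearMap.ker L) = 0 := by omega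
  have hbot : LinearMap.ker L = ⊥ := Submodule.finrank_eq_zero.1 hk0
  have hmem : (⟨p, (mem_restrictTotalDegree _ _ _).2 hp⟩ : restrictTotalDegree (Fin n) ℝ 3) ∈
      LinearMap.ker L := by
    rw [LinearMap.mem_ker]
    funext s
    exact h0 s s.2
  rw [hbot, Submodule.mem_bot] at hmem
  exact congrArg Subtype.val hmem

/-- If the restrictions of cubic polynomials to `S` span a space of full dimension, `S` is not the
union of a sphere and the origin: the cubic `x₁ (‖x‖² - r²)` would vanish on `S`. -/
lemma exists_norm_ne (hn : 0 < n) (hS : dimPolOn n 3 S = (n + 3).choose 3) {r : ℝ} (hr : 0 ≤ r) :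
    ∃ s ∈ S, s ≠ 0 ∧ ‖s‖ ≠ r := by
  by_contra! hcon
  set e : Euc n := EuclideanSpace.single ⟨0, hn⟩ (1 : ℝ)
  have he : ‖e‖ = 1 := by simp [e]
  have hz := eq_zero_of_vanish hS (p := linPoly e * (nsqPoly n - C (r ^ 2)))
    (degree_mul_le (degree_lin e) (degree_sub_le degree_nsq (degree_C_le _ _)) le_rfl) (by
      intro s hs
      rw [evalPt_mul, evalPt_lin, evalPt_sub, evalPt_nsq, evalPt_C]
      by_cases h0 : s = 0
      · simp [h0]
      · rw [real_inner_self_eq_norm_sq, hcon s hs h0]; ring)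
  have hv := congrArg (evalPt ((r + 1) • e)) hz
  rw [evalPt_mul, evalPt_lin, evalPt_sub, evalPt_nsq, evalPt_C, real_inner_self_eq_norm_sq,
    norm_smul, inner_smul_right, real_inner_self_eq_norm_sq, he, Real.norm_of_nonneg (by positivity)]
    at hv
  have h1 : evalPt ((r + 1) • e) (0 : MvPolynomial (Fin n) ℝ) = 0 := by simp [evalPt]
  rw [h1] at hv
  nlinarith [sq_nonneg r]

/-- If cubic polynomials on `S` are determined by their values on `X ⊆ S`, and the number of points
is the dimension, then all values on `X` are attained. -/
lemma interpolates {X : Finset (Euc n)} (hXS : ∀ x ∈ X, x ∈ S) (hcard : #X = dimPolOn n 3 S)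
    (hdet : ∀ f : MvPolynomial (Fin n) ℝ, f.totalDegree ≤ 3 → (∀ x ∈ X, evalPt x f = 0) →
      ∀ s ∈ S, evalPt s f = 0) : Interpolates X := by
  have := finite_polOn (n := n) (S := S)
  let ρ : PolOn n 3 S →ₗ[ℝ] (X → ℝ) :=
    (LinearMap.funLeft ℝ ℝ fun x : X => (⟨x, hXS x x.2⟩ : S)).comp (PolOn n 3 S).subtype
  have hinj : Function.Injective ρ := by
    rw [injective_iff_map_eq_zero]
    rintro ⟨g, hg⟩ hg0
    obtain ⟨f, hf, rfl⟩ := hg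
    have hf' := (mem_restrictTotalDegree _ _ _).1 hf
    apply Subtype.ext
    funext s
    exact hdet f hf' (fun x hx => congrFun hg0 ⟨x, hx⟩) s s.2
  have hrank : Module.finrank ℝ (PolOn n 3 S) = Module.finrank ℝ (X → ℝ) := by
    rw [Module.finrank_fintype_fun_eq_card, Fintype.card_coe, hcard]
    rfl
  have hsurj := (LinearMap.injective_iff_surjective_of_finrank_eq_finrank hrank).1 hinj
  intro x hx
  obtain ⟨⟨g, hg⟩, hg1⟩ := hsurj (Pi.single ⟨x, hx⟩ 1)
  obtain ⟨f, hf, rfl⟩ := hg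
  have hval : ∀ y (hy : y ∈ X), evalPt y f = (Pi.single ⟨x, hx⟩ 1 : X → ℝ) ⟨y, hy⟩ :=
    fun y hy => congrFun hg1 ⟨y, hy⟩
  refine ⟨f, (mem_restrictTotalDegree _ _ _).1 hf, ?_, fun y hy hyx => ?_⟩
  · rw [hval x hx, Pi.single_eq_same]
  · rw [hval y hy, Pi.single_eq_of_ne]
    simpa using hyx

end Restriction

lemma sphAvg_one_le (n : ℕ) (r : ℝ) : sphAvg n r (fun _ => 1) ≤ 1 := by
  unfold sphAvg
  split_ifs
  · exact le_rfl
  · rw [average_eq, integral_const, smul_eq_mul, smul_eq_mul, mul_one]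
    exact inv_mul_le_one

/-- The design identity for the constant `1` forces the spherical averages of `1`, which are
at most `1`, to be equal to `1`. -/
lemma sphAvg_one_eq {n : ℕ} {X : Finset (Euc n)} {w : Euc n → ℝ} {r₁ r₂ : ℝ}
    (hpos₁ : 0 < shellWeight X w r₁) (hpos₂ : 0 < shellWeight X w r₂)
    (h : shellWeight X w r₁ * sphAvg n r₁ (fun _ => 1) +
      shellWeight X w r₂ * sphAvg n r₂ (fun _ => 1) = shellWeight X w r₁ + shellWeight X w r₂) :
    sphAvg n r₁ (fun _ => 1) = 1 := by
  have h1 := sphAvg_one_le n r₁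
  have h2 := sphAvg_one_le n r₂
  refine le_antisymm h1 ?_
  by_contra! hlt
  nlinarith

/-- For every integer `n` with `3 ≤ n ≤ 8`, there is no tight Euclidean
6-design in `ℝⁿ` supported by two concentric spheres (with any positive weight function). -/
theorem no_tight_euclidean_six_design_of_dim_le_eight :
    ∀ n : ℕ, 3 ≤ n → n ≤ 8 →
      ¬ ∃ (X : Finset (Euc n)) (w : Euc n → ℝ),
          X.Nonempty ∧ (∀ x ∈ X, 0 < w x) ∧
          (X.image (fun x => ‖x‖)).card = 2 ∧
          IsTightDesign n 3 X w := by
  rintro n hn3 hn8 ⟨X, w, -, hw, hcard2, ⟨hdes, hX⟩, hdim⟩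
  have hn : 0 < n := by omega
  obtain ⟨r₁, r₂, hne, himg⟩ := Finset.card_eq_two.1 hcard2
  have hnorm : ∀ x ∈ X, ‖x‖ = r₁ ∨ ‖x‖ = r₂ := by
    intro x hx
    have : ‖x‖ ∈ X.image (fun x => ‖x‖) := Finset.mem_image_of_mem _ hx
    simpa [himg] using this
  have hmem : ∀ r ∈ ({r₁, r₂} : Finset ℝ), 0 ≤ r ∧ 0 < shellWeight X w r := by
    intro r hr
    rw [← himg, Finset.mem_image] at hr
    obtain ⟨x, hx, rfl⟩ := hr
    refine ⟨norm_nonneg x, Finset.sum_pos (fun y hy => hw y (Finset.mem_filter.1 hy).1)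
      ⟨x, by simp [hx]⟩⟩
  obtain ⟨hr₁, hW₁⟩ := hmem r₁ (by simp)
  obtain ⟨hr₂, hW₂⟩ := hmem r₂ (by simp)
  have hS : ∀ s : Euc n, s ∈ suppSpheres n X ↔ ‖s‖ = r₁ ∨ ‖s‖ = r₂ := by
    intro s
    simp [suppSpheres, himg]
  have hr₁0 : r₁ ≠ 0 := by
    rintro rfl
    obtain ⟨s, hs, hs0, hsr⟩ := exists_norm_ne hn hdim hr₂
    exact ((hS s).1 hs).elim (fun h => hs0 (norm_eq_zero.1 h)) hsr
  have hr₂0 : r₂ ≠ 0 := by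
    rintro rfl
    obtain ⟨s, hs, hs0, hsr⟩ := exists_norm_ne hn hdim hr₁
    exact ((hS s).1 hs).elim hsr fun h => hs0 (norm_eq_zero.1 h)
  have hdes' : ∀ p : MvPolynomial (Fin n) ℝ, p.totalDegree ≤ 6 →
      shellWeight X w r₁ * sphAvg n r₁ (fun y => evalPt y p) +
      shellWeight X w r₂ * sphAvg n r₂ (fun y => evalPt y p) = ∑ x ∈ X, w x * evalPt x p := by
    intro p hp
    rw [← hdes p hp, himg, Finset.sum_pair hne]
    rfl
  have hone := hdes' 1 (by simp)
  simp only [evalPt_one, mul_one] at hone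
  have hsplit : ∑ x ∈ X, w x = shellWeight X w r₁ + shellWeight X w r₂ := by
    rw [← Finset.sum_fiberwise_of_maps_to (g := fun x => ‖x‖) (t := {r₁, r₂})
      (fun x hx => by simpa using hnorm x hx), Finset.sum_pair hne]
    rfl
  rw [hsplit] at hone
  obtain ⟨ν₁, hν₁, hi₁⟩ := exists_isSphereProb hr₁0 (sphAvg_one_eq hW₁ hW₂ hone)
  obtain ⟨ν₂, hν₂, hi₂⟩ := exists_isSphereProb hr₂0
    (sphAvg_one_eq hW₂ hW₁ (by rw [add_comm, hone, add_comm]))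
  have hT : TwoShell n X w r₁ r₂ ν₁ ν₂ :=
    { pos₁ := hr₁.lt_of_ne' hr₁0
      pos₂ := hr₂.lt_of_ne' hr₂0
      ne := hne
      w_pos := hw
      norm_eq := hnorm
      weight_pos₁ := hW₁
      weight_pos₂ := hW₂
      prob₁ := hν₁
      prob₂ := hν₂
      design := fun p hp => by rw [← hi₁, ← hi₂, hdes' p hp] }
  refine hT.contradiction hn3 hn8 (interpolates (fun x hx => (hS x).2 (hnorm x hx)) hX ?_)
    (hX.trans hdim)
  -- a cubic vanishing on `X` vanishes on both spheres, by the reproducing kernels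
  intro f hf hf0 s hs
  obtain ⟨a₁, b₁, c₁, -, h₁⟩ := hT.reproducing hn
  obtain ⟨a₂, b₂, c₂, -, h₂⟩ := hT.symm.reproducing hn
  rcases (hS s).1 hs with h | h
  · rw [h₁ s h f hf]
    exact Finset.sum_eq_zero fun y hy => by simp [hf0 y hy]
  · rw [h₂ s h f hf]
    exact Finset.sum_eq_zero fun y hy => by simp [hf0 y hy]

end
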